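/- arXiv:1002.0144 — 7 statements merged into one kernel-verified Lean document; each statement's English description precedes it below -/
import Mathlib

section
/- Let a, b, c, d : ℝ → ℝ be continuous and let ψ : ℝ × ℝ → ℂ be twice continuously differentiable in x and continuously differentiable in t, satisfying the time-dependent Schrödinger equation i ∂ψ/∂t = Hψ, i.e. i ψ_t(x,t) = −a(t) ψ_xx(x,t) + b(t) x² ψ(x,t) − i c(t) (ψ(x,t) + x ψ_x(x,t)) − i d(t) x ψ_x(x,t). Then the function ψ₁(x,t) := exp(∫₀ᵗ (c(s) − d(s)) ds) · ψ(x,t) satisfies the adjoint equation i ∂ψ₁/∂t = H†ψ₁, i.e. i (ψ₁)_t = −a (ψ₁)_xx + b x² ψ₁ − i d (ψ₁ + x (ψ₁)_x) − i c x (ψ₁)_x. -/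
/-!
By the canonical commutation relation, exchanging the coefficients `c` and `d` changes the
Hamiltonian only by a multiple of the identity: `H† = H + i (c - d)`. A factor `g` depending on
time alone commutes with `H`, and the term `i g' ψ` that it adds to `i ∂ₜ(g ψ)` is exactly this
discrepancy as soon as `g' = (c - d) g`.
-/

open Complex

/-- The quadratic Hamiltonian `a p² + b x² + c p x + d x p` with `p = -i ∂/∂x`, at a fixed time.
For real coefficients its formal adjoint is `quadraticHamiltonian a b d c`. -/
noncomputable def quadraticHamiltonian (a b c d : ℂ) (f : ℝ → ℂ) (x : ℝ) : ℂ :=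
  -a * deriv (deriv f) x + b * (x : ℂ) ^ 2 * f x
    - I * c * (f x + (x : ℂ) * deriv f x)
    - I * d * ((x : ℂ) * deriv f x)

/-- Classical solutions `ψ x t` of the Schrödinger equation `i ψ_t = H ψ` for the quadratic
Hamiltonian with time-dependent coefficients. The regularity is part of the notion, so that none
of the derivatives in the equation is a junk value. -/
structure IsSchrodingerSolution (a b c d : ℝ → ℂ) (ψ : ℝ → ℝ → ℂ) : Prop where
  differentiable_space (t : ℝ) : Differentiable ℝ fun x => ψ x t
  differentiable_deriv_space (t : ℝ) : Differentiable ℝ (deriv fun x => ψ x t)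
  differentiable_time (x : ℝ) : Differentiable ℝ (ψ x)
  equation (x t : ℝ) :
    I * deriv (ψ x) t = quadraticHamiltonian (a t) (b t) (c t) (d t) (fun y => ψ y t) x

theorem quadraticHamiltonian_swap (a b c d : ℂ) (f : ℝ → ℂ) (x : ℝ) :
    quadraticHamiltonian a b d c f x =
      quadraticHamiltonian a b c d f x + I * (c - d) * f x := by
  unfold quadraticHamiltonian
  ring

theorem quadraticHamiltonian_const_mul (a b c d k : ℂ) (f : ℝ → ℂ) (x : ℝ) :
    quadraticHamiltonian a b c d (fun y => k * f y) x =
      k * quadraticHamiltonian a b c d f x := by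
  simp only [quadraticHamiltonian, deriv_const_mul_field']
  ring

theorem hasDerivAt_ofReal_exp_integral {k : ℝ → ℝ} (hk : Continuous k) (t₀ t : ℝ) :
    HasDerivAt (fun u => (Real.exp (∫ s in t₀..u, k s) : ℂ))
      (k t * (Real.exp (∫ s in t₀..t, k s) : ℂ)) t := by
  have hexp := (hk.integral_hasStrictDerivAt t₀ t).hasDerivAt.exp.ofReal_comp
  rwa [ofReal_mul, mul_comm] at hexp

namespace IsSchrodingerSolution

theorem of_hasDerivAt {a b c d : ℝ → ℂ} {ψ ψx ψxx ψt : ℝ → ℝ → ℂ}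
    (hψx : ∀ x t, HasDerivAt (fun y => ψ y t) (ψx x t) x)
    (hψxx : ∀ x t, HasDerivAt (fun y => ψx y t) (ψxx x t) x)
    (hψt : ∀ x t, HasDerivAt (ψ x) (ψt x t) t)
    (hSE : ∀ x t, I * ψt x t =
      -a t * ψxx x t + b t * (x : ℂ) ^ 2 * ψ x t
        - I * c t * (ψ x t + (x : ℂ) * ψx x t)
        - I * d t * ((x : ℂ) * ψx x t)) :
    IsSchrodingerSolution a b c d ψ := by
  have deriv_space (t : ℝ) : deriv (fun y => ψ y t) = fun y => ψx y t :=
    funext fun y => (hψx y t).deriv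
  refine ⟨fun t x => (hψx x t).differentiableAt, fun t => ?_,
    fun x t => (hψt x t).differentiableAt, fun x t => ?_⟩
  · rw [deriv_space]
    exact fun x => (hψxx x t).differentiableAt
  · simp only [quadraticHamiltonian, deriv_space, (hψxx x t).deriv, (hψt x t).deriv, hSE]

end IsSchrodingerSolution

theorem statement_0_general {a b c d g : ℝ → ℂ} {ψ : ℝ → ℝ → ℂ}
    (hψ : IsSchrodingerSolution a b c d ψ)
    (hg : ∀ t, HasDerivAt g ((c t - d t) * g t) t) :
    IsSchrodingerSolution a b d c fun x t => g t * ψ x t where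
  differentiable_space t := (hψ.differentiable_space t).const_mul (g t)
  differentiable_deriv_space t := by
    rw [deriv_const_mul_field']
    exact (hψ.differentiable_deriv_space t).const_mul (g t)
  differentiable_time x t := (hg t).differentiableAt.mul (hψ.differentiable_time x t)
  equation x t := by
    have product_rule : deriv (fun s => g s * ψ x s) t =
        (c t - d t) * g t * ψ x t + g t * deriv (ψ x) t :=
      ((hg t).mul (hψ.differentiable_time x t).hasDerivAt).deriv
    rw [product_rule, quadraticHamiltonian_const_mul, quadraticHamiltonian_swap]
    linear_combination g t * hψ.equation x t

/-- If ψ solves the Schrödinger equation i ψ_t = Hψ for the quadratic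
Hamiltonian H = a p² + b x² + c px + d xp, then
ψ₁(x,t) = exp(∫₀ᵗ (c−d)) ψ(x,t) solves the adjoint equation i (ψ₁)_t = H† ψ₁. -/
theorem statement_0
    (a b c d : ℝ → ℝ) (ha : Continuous a) (hb : Continuous b)
    (hc : Continuous c) (hd : Continuous d)
    (ψ ψx ψxx ψt : ℝ → ℝ → ℂ)
    -- ψ is twice continuously differentiable in x
    (hψx : ∀ x t, HasDerivAt (fun x' => ψ x' t) (ψx x t) x)
    (hψxx : ∀ x t, HasDerivAt (fun x' => ψx x' t) (ψxx x t) x)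
    (hψxxC : Continuous fun p : ℝ × ℝ => ψxx p.1 p.2)
    -- ψ is continuously differentiable in t
    (hψt : ∀ x t, HasDerivAt (fun t' => ψ x t') (ψt x t) t)
    (hψtC : Continuous fun p : ℝ × ℝ => ψt p.1 p.2)
    -- the time-dependent Schrödinger equation i ψ_t = Hψ
    (hSE : ∀ x t, Complex.I * ψt x t =
        -(a t : ℂ) * ψxx x t + (b t : ℂ) * (x : ℂ) ^ 2 * ψ x t
          - Complex.I * (c t : ℂ) * (ψ x t + (x : ℂ) * ψx x t)
          - Complex.I * (d t : ℂ) * ((x : ℂ) * ψx x t))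
    (ψ₁ : ℝ → ℝ → ℂ)
    (hψ₁ : ∀ x t, ψ₁ x t =
        (Real.exp (∫ s in (0:ℝ)..t, c s - d s) : ℂ) * ψ x t) :
    -- the adjoint equation i (ψ₁)_t = H† ψ₁
    ∀ x t, Complex.I * deriv (fun t' => ψ₁ x t') t =
        -(a t : ℂ) * deriv (fun x' => deriv (fun x'' => ψ₁ x'' t) x') x
          + (b t : ℂ) * (x : ℂ) ^ 2 * ψ₁ x t
          - Complex.I * (d t : ℂ) * (ψ₁ x t + (x : ℂ) * deriv (fun x' => ψ₁ x' t) x)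
          - Complex.I * (c t : ℂ) * ((x : ℂ) * deriv (fun x' => ψ₁ x' t) x) := by
  obtain rfl : ψ₁ = fun x t => (Real.exp (∫ s in (0:ℝ)..t, c s - d s) : ℂ) * ψ x t := funext₂ hψ₁
  have hψ := IsSchrodingerSolution.of_hasDerivAt hψx hψxx hψt hSE
  exact (statement_0_general hψ fun t => by
    simpa using hasDerivAt_ofReal_exp_integral (hc.sub hd) 0 t).equation
end

section
/- (Eigenvalue problem for the linear invariants.) Let a, b, c, d : ℝ → ℝ be continuous with a, c continuously differentiable, a(t) ≠ 0, and let μ : ℝ → ℝ be a twice continuously differentiable solution of the characteristic equation μ′′ − (a′/a + 2c − 2d)μ′ + 4(ab − cd + ca′/(2a) − c′/2)μ = 0 with μ(t) > 0 on an open interval I. Set λ(t) = exp(∫₀ᵗ(c(s) − d(s))ds), α(t) = μ′/(4aμ) − c/(2a), β(t) = k·λ(t)/μ(t) for a real constant k, let γ : I → ℝ be any function, and define the kernel K(x,y,t) = (2πμ(t))^{−1/2} exp(i(α(t)x² + β(t)xy + γ(t)y²)). Then for every t ∈ I and all x, y ∈ ℝ the linear invariant P(t) = μ(t)p + ((2c(t)μ(t)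 − μ′(t))/(2a(t)))x satisfies the eigenvalue relation P(t)K(x,y,t) = k·λ(t)·y·K(x,y,t), where P(t)K = −iμ(t) ∂K/∂x + ((2cμ − μ′)/(2a)) x K. -/
open Real in
/-- λ(t) = exp(∫₀ᵗ (c(s) − d(s)) ds). -/
noncomputable def lamFun (c d : ℝ → ℝ) (t : ℝ) : ℝ :=
  Real.exp (∫ s in (0:ℝ)..t, c s - d s)

/-- α(t) = μ′/(4aμ) − c/(2a). -/
noncomputable def alphaFun (a c μ : ℝ → ℝ) (t : ℝ) : ℝ :=
  deriv μ t / (4 * a t * μ t) - c t / (2 * a t)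

/-- β(t) = k·λ(t)/μ(t). -/
noncomputable def betaFun (c d μ : ℝ → ℝ) (k t : ℝ) : ℝ :=
  k * lamFun c d t / μ t

/-- The kernel K(x,y,t) = (2πμ(t))^{−1/2} exp(i(α(t)x² + β(t)xy + γ(t)y²)). -/
noncomputable def Kker (a c d μ : ℝ → ℝ) (k : ℝ) (γ : ℝ → ℝ) (x y t : ℝ) : ℂ :=
  (1 / Real.sqrt (2 * Real.pi * μ t) : ℝ) *
    Complex.exp (Complex.I *
      ((alphaFun a c μ t : ℂ) * (x : ℂ) ^ 2 + (betaFun c d μ k t : ℂ) * (x : ℂ) * (y : ℂ)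
        + (γ t : ℂ) * (y : ℂ) ^ 2))

/-!
On a Gaussian `K = N exp(i(αx² + βxy + γy²))` the momentum acts as multiplication by
`2αx + βy`, so `mp + qx` multiplies `K` by `(2mα + q)x + mβy`. The function `α` is the one for
which the coefficient of `x` vanishes when `m = μ` and `q = (2cμ - μ')/(2a)`; what remains is the
eigenvalue `μβy = kλy`.
-/

/-- The kernel `N exp(i(αx² + βxy + γy²))` with arbitrary complex amplitude and coefficients,
of which `Kker` at a fixed time is an instance. -/
noncomputable def gaussianKernel (N α β γ : ℂ) (x y : ℝ) : ℂ :=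
  N * Complex.exp (Complex.I * (α * (x : ℂ) ^ 2 + β * (x : ℂ) * (y : ℂ) + γ * (y : ℂ) ^ 2))

/-- The first-order operator `mp + qx`, where `p = -i∂/∂x`, applied to `f` and evaluated at `x`;
meaningful only where `f` is differentiable, since it is written with `deriv`. -/
noncomputable def linearInvariant (m q : ℂ) (f : ℝ → ℂ) (x : ℝ) : ℂ :=
  -Complex.I * m * deriv f x + q * (x : ℂ) * f x

theorem hasDerivAt_gaussianKernel (N α β γ : ℂ) (x y : ℝ) :
    HasDerivAt (fun x' => gaussianKernel N α β γ x' y)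
      (Complex.I * (2 * α * x + β * y) * gaussianKernel N α β γ x y) x := by
  have hcoe : HasDerivAt (fun x' : ℝ => (x' : ℂ)) 1 x := Complex.ofRealCLM.hasDerivAt
  have hphase : HasDerivAt
      (fun x' : ℝ => α * (x' : ℂ) ^ 2 + β * (x' : ℂ) * (y : ℂ) + γ * (y : ℂ) ^ 2)
      (2 * α * x + β * y) x := by
    refine ((((hcoe.fun_pow 2).const_mul α).fun_add
      ((hcoe.const_mul β).mul_const (y : ℂ))).add_const (γ * (y : ℂ) ^ 2)).congr_deriv ?_
    push_cast
    ring
  refine ((hphase.const_mul Complex.I).cexp.const_mul N).congr_deriv ?_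
  rw [gaussianKernel]
  ring

theorem linearInvariant_gaussianKernel (m q N α β γ : ℂ) (x y : ℝ) :
    linearInvariant m q (fun x' => gaussianKernel N α β γ x' y) x =
      ((2 * m * α + q) * x + m * β * y) * gaussianKernel N α β γ x y := by
  rw [linearInvariant, (hasDerivAt_gaussianKernel N α β γ x y).deriv]
  linear_combination
    (-m * (2 * α * x + β * y) * gaussianKernel N α β γ x y) * Complex.I_mul_I

theorem two_mul_mul_alphaFun_add_eq_zero {a c μ : ℝ → ℝ} {t : ℝ} (ha : a t ≠ 0) (hμ : μ t ≠ 0) :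
    2 * μ t * alphaFun a c μ t + (2 * c t * μ t - deriv μ t) / (2 * a t) = 0 := by
  rw [alphaFun]
  field_simp
  ring

theorem statement_4_general {a c μ : ℝ → ℝ} {μ' t : ℝ} (ha : a t ≠ 0) (hμ : μ t ≠ 0)
    (hμ' : HasDerivAt μ μ' t) (N γ : ℂ) (ω x y : ℝ) :
    linearInvariant (μ t) ((2 * c t * μ t - μ') / (2 * a t) : ℝ)
        (fun x' => gaussianKernel N (alphaFun a c μ t) (ω / μ t : ℝ) γ x' y) x =
      ((ω * y : ℝ) : ℂ) * gaussianKernel N (alphaFun a c μ t) (ω / μ t : ℝ) γ x y := by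
  have hx_coeff : (2 * μ t * alphaFun a c μ t +
      ((2 * c t * μ t - μ') / (2 * a t) : ℝ) : ℂ) = 0 := by
    rw [← hμ'.deriv]
    exact_mod_cast two_mul_mul_alphaFun_add_eq_zero ha hμ
  have hy_coeff : (μ t * (ω / μ t : ℝ) : ℂ) = ω := by
    exact_mod_cast mul_div_cancel₀ ω hμ
  rw [linearInvariant_gaussianKernel, hx_coeff, hy_coeff, zero_mul, zero_add, Complex.ofReal_mul]

/-- Eigenvalue problem for the linear invariants: for any solution μ of
the characteristic equation, positive on an open interval (t₁,t₂), the linear invariant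
P(t) = μ(t)p + ((2cμ − μ′)/(2a))x satisfies P(t)K(x,y,t) = k·λ(t)·y·K(x,y,t). -/
theorem statement_4
    (a b c d μ γ : ℝ → ℝ) (k t₁ t₂ : ℝ)
    (ha : ContDiff ℝ 1 a) (hc : ContDiff ℝ 1 c)
    (hb : Continuous b) (hd : Continuous d)
    (hane : ∀ t, a t ≠ 0)
    (hμ : ContDiff ℝ 2 μ)
    -- the characteristic equation μ′′ − (a′/a + 2c − 2d)μ′ + 4σμ = 0
    (hchar : ∀ t, deriv (deriv μ) t - (deriv a t / a t + 2 * c t - 2 * d t) * deriv μ t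
        + 4 * (a t * b t - c t * d t + c t * deriv a t / (2 * a t) - deriv c t / 2)
          * μ t = 0)
    (hμpos : ∀ t ∈ Set.Ioo t₁ t₂, 0 < μ t) :
    ∀ t ∈ Set.Ioo t₁ t₂, ∀ x y : ℝ,
      -Complex.I * (μ t : ℂ) * deriv (fun x' => Kker a c d μ k γ x' y t) x
          + (((2 * c t * μ t - deriv μ t) / (2 * a t) : ℝ) : ℂ) * (x : ℂ)
            * Kker a c d μ k γ x y t
        = ((k * lamFun c d t * y : ℝ) : ℂ) * Kker a c d μ k γ x y t := by
  intro t ht x y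
  exact statement_4_general (hane t) (hμpos t ht).ne'
    (hμ.differentiable two_ne_zero t).hasDerivAt _ (γ t) (k * lamFun c d t) x y
end

section
/- Let a, b, c, d : ℝ → ℝ be continuous and let A, B, C : ℝ → ℝ be continuously differentiable satisfying A′ + 4aC − (3c + d)A = 0, B′ − 4bC + (c + 3d)B = 0, C′ + 2(aB − bA) − (c − d)C = 0. Let ψ : ℝ × ℝ → ℂ be smooth (with continuous mixed partial derivatives up to the orders appearing) and satisfy i ∂ψ/∂t = Hψ. Then the function ψ₁(x,t) := −A(t) ψ_xx(x,t) + B(t) x² ψ(x,t) − i C(t)(ψ(x,t) + 2x ψ_x(x,t)), i.e. ψ₁ = (A p² + B x² + C(px + xp))ψ, satisfies the adjoint equation i ∂ψ₁/∂t = H†ψ₁. -/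
/-!
Write `E = A p² + B x² + C px + D xp`. The commutation relation `px - xp = -i` gives
`H† = H + i(c - d)`, and commutators of quadratic operators are quadratic, so
`H†E - EH = [H, E] + i(c - d)E` is again quadratic. The system for `A, B, C, D` says exactly that
it equals `iE'`, whence `i(Eψ)' = iE'ψ + E(iψ') = iE'ψ + EHψ = H†Eψ`.
-/

open Complex

/-- The operator `α p² + β x² + γ px + δ xp` with `p = -i d/dx`, acting on functions of `x`. Then
`H = quadOp a b c d`, `H† = quadOp a b d c` for real coefficients, and
`A p² + B x² + C(px + xp) = quadOp A B C C`. -/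
noncomputable def quadOp (α β γ δ : ℂ) (f : ℝ → ℂ) (x : ℝ) : ℂ :=
  -α * deriv (deriv f) x + β * (x : ℂ) ^ 2 * f x
    - I * γ * (f x + (x : ℂ) * deriv f x) - I * δ * ((x : ℂ) * deriv f x)

theorem quadOp_const_mul (α β γ δ k : ℂ) (f : ℝ → ℂ) (x : ℝ) :
    quadOp α β γ δ (fun y => k * f y) x = k * quadOp α β γ δ f x := by
  have hderiv (g : ℝ → ℂ) : deriv (fun y => k * g y) = fun y => k * deriv g y :=
    funext fun _ => deriv_const_mul_field k
  simp only [quadOp, hderiv]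
  ring

theorem quadOp_swap (α β γ δ : ℂ) (f : ℝ → ℂ) (x : ℝ) :
    quadOp α β δ γ f x = quadOp α β γ δ f x + I * (γ - δ) * f x := by
  simp only [quadOp]
  ring

section SpaceDerivatives

variable {f : ℝ → ℂ}

theorem hasDerivAt_quadOp (α β γ δ : ℂ) {x : ℝ} (hf : DifferentiableAt ℝ f x)
    (hf' : DifferentiableAt ℝ (deriv f) x) (hf'' : DifferentiableAt ℝ (deriv (deriv f)) x) :
    HasDerivAt (quadOp α β γ δ f)
      (quadOp α β γ δ (deriv f) x + (2 * β * x * f x - I * (γ + δ) * deriv f x)) x := by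
  have hx : HasDerivAt (fun y : ℝ => (y : ℂ)) 1 x := ofRealCLM.hasDerivAt
  have hxf' := hx.fun_mul hf'.hasDerivAt
  have hQ := (((hf''.hasDerivAt.const_mul (-α)).fun_add
    (((hx.fun_pow 2).const_mul β).fun_mul hf.hasDerivAt)).fun_sub
    ((hf.hasDerivAt.fun_add hxf').const_mul (I * γ))).fun_sub (hxf'.const_mul (I * δ))
  refine hQ.congr_deriv ?_
  simp only [quadOp]
  ring

theorem deriv_quadOp (α β γ δ : ℂ) (hf : Differentiable ℝ f)
    (hf' : Differentiable ℝ (deriv f)) (hf'' : Differentiable ℝ (deriv (deriv f))) :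
    deriv (quadOp α β γ δ f) =
      fun x => quadOp α β γ δ (deriv f) x + (2 * β * x * f x - I * (γ + δ) * deriv f x) :=
  funext fun x => (hasDerivAt_quadOp α β γ δ (hf x) (hf' x) (hf'' x)).deriv

theorem deriv_deriv_quadOp (α β γ δ : ℂ) (hf : Differentiable ℝ f)
    (hf' : Differentiable ℝ (deriv f)) (hf'' : Differentiable ℝ (deriv (deriv f)))
    (hf''' : Differentiable ℝ (deriv (deriv (deriv f)))) (x : ℝ) :
    deriv (deriv (quadOp α β γ δ f)) x =
      quadOp α β γ δ (deriv (deriv f)) x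
        + (2 * β * f x + 4 * β * x * deriv f x - 2 * I * (γ + δ) * deriv (deriv f) x) := by
  have hx : HasDerivAt (fun y : ℝ => (y : ℂ)) 1 x := ofRealCLM.hasDerivAt
  have hcomm := ((hx.const_mul (2 * β)).fun_mul (hf x).hasDerivAt).fun_sub
    ((hf' x).hasDerivAt.const_mul (I * (γ + δ)))
  rw [deriv_quadOp α β γ δ hf hf' hf'',
    ((hasDerivAt_quadOp α β γ δ (hf' x) (hf'' x) (hf''' x)).fun_add hcomm).deriv]
  ring

theorem quadOp_commutator (a b c d A B C D : ℂ) (hf : Differentiable ℝ f)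
    (hf' : Differentiable ℝ (deriv f)) (hf'' : Differentiable ℝ (deriv (deriv f)))
    (hf''' : Differentiable ℝ (deriv (deriv (deriv f)))) (x : ℝ) :
    quadOp a b c d (quadOp A B C D f) x - quadOp A B C D (quadOp a b c d f) x =
      2 * I * quadOp ((c + d) * A - a * (C + D)) (b * (C + D) - (c + d) * B)
        (b * A - a * B) (b * A - a * B) f x := by
  have comp_eq (α β γ δ α' β' γ' δ' : ℂ) :
      quadOp α β γ δ (quadOp α' β' γ' δ' f) x =
        -α * (quadOp α' β' γ' δ' (deriv (deriv f)) x
          + (2 * β' * f x + 4 * β' * x * deriv f x - 2 * I * (γ' + δ') * deriv (deriv f) x))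
        + β * (x : ℂ) ^ 2 * quadOp α' β' γ' δ' f x - I * γ * quadOp α' β' γ' δ' f x
        - I * (γ + δ) * (x * (quadOp α' β' γ' δ' (deriv f) x
          + (2 * β' * x * f x - I * (γ' + δ') * deriv f x))) := by
    rw [quadOp, deriv_deriv_quadOp α' β' γ' δ' hf hf' hf'' hf''',
      deriv_quadOp α' β' γ' δ' hf hf' hf'']
    ring
  rw [comp_eq, comp_eq]
  simp only [quadOp]
  linear_combination 2 * (b * A - a * B) * (f x + 2 * x * deriv f x) * I_sq

theorem quadOp_adjoint_comp (a b c d A B C D : ℂ) (hf : Differentiable ℝ f)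
    (hf' : Differentiable ℝ (deriv f)) (hf'' : Differentiable ℝ (deriv (deriv f)))
    (hf''' : Differentiable ℝ (deriv (deriv (deriv f)))) (x : ℝ) :
    quadOp a b d c (quadOp A B C D f) x =
      I * quadOp ((3 * c + d) * A - 2 * a * (C + D)) (2 * b * (C + D) - (c + 3 * d) * B)
        ((c - d) * C - 2 * (a * B - b * A)) ((c - d) * D - 2 * (a * B - b * A)) f x
      + quadOp A B C D (quadOp a b c d f) x := by
  rw [quadOp_swap a b c d, ← sub_eq_iff_eq_add, add_sub_right_comm,
    quadOp_commutator a b c d A B C D hf hf' hf'' hf''']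
  simp only [quadOp]
  ring

end SpaceDerivatives

theorem hasDerivAt_quadOp_time {α β γ δ : ℝ → ℂ} {α' β' γ' δ' : ℂ} {ψ : ℝ → ℝ → ℂ} {φ : ℝ → ℂ}
    {x t : ℝ} (hα : HasDerivAt α α' t) (hβ : HasDerivAt β β' t) (hγ : HasDerivAt γ γ' t)
    (hδ : HasDerivAt δ δ' t) (hψ : HasDerivAt (fun s => ψ x s) (φ x) t)
    (hψx : HasDerivAt (fun s => deriv (fun y => ψ y s) x) (deriv φ x) t)
    (hψxx : HasDerivAt (fun s => deriv (deriv fun y => ψ y s) x) (deriv (deriv φ) x) t) :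
    HasDerivAt (fun s => quadOp (α s) (β s) (γ s) (δ s) (fun y => ψ y s) x)
      (quadOp α' β' γ' δ' (fun y => ψ y t) x + quadOp (α t) (β t) (γ t) (δ t) φ x) t := by
  have hxψx := hψx.const_mul (x : ℂ)
  have hQ := (((hα.fun_neg.fun_mul hψxx).fun_add ((hβ.mul_const ((x : ℂ) ^ 2)).fun_mul hψ)).fun_sub
    ((hγ.const_mul I).fun_mul (hψ.fun_add hxψx))).fun_sub ((hδ.const_mul I).fun_mul hxψx)
  refine hQ.congr_deriv ?_
  simp only [quadOp]
  ring

theorem statement_7_general {a b c d A B C D : ℝ → ℂ}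
    (hA : ∀ t, HasDerivAt A ((3 * c t + d t) * A t - 2 * a t * (C t + D t)) t)
    (hB : ∀ t, HasDerivAt B (2 * b t * (C t + D t) - (c t + 3 * d t) * B t) t)
    (hC : ∀ t, HasDerivAt C ((c t - d t) * C t - 2 * (a t * B t - b t * A t)) t)
    (hD : ∀ t, HasDerivAt D ((c t - d t) * D t - 2 * (a t * B t - b t * A t)) t)
    {ψ ψt : ℝ → ℝ → ℂ}
    (hψ : ∀ t, Differentiable ℝ fun x => ψ x t)
    (hψx : ∀ t, Differentiable ℝ (deriv fun x => ψ x t))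
    (hψxx : ∀ t, Differentiable ℝ (deriv (deriv fun x => ψ x t)))
    (hψxxx : ∀ t, Differentiable ℝ (deriv (deriv (deriv fun x => ψ x t))))
    (hψt : ∀ x t, HasDerivAt (fun s => ψ x s) (ψt x t) t)
    (hψxt : ∀ x t, HasDerivAt (fun s => deriv (fun y => ψ y s) x) (deriv (fun y => ψt y t) x) t)
    (hψxxt : ∀ x t, HasDerivAt (fun s => deriv (deriv fun y => ψ y s) x)
      (deriv (deriv fun y => ψt y t) x) t)
    (hSE : ∀ x t, I * ψt x t = quadOp (a t) (b t) (c t) (d t) (fun y => ψ y t) x) (x t : ℝ) :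
    HasDerivAt (fun s => I * quadOp (A s) (B s) (C s) (D s) (fun y => ψ y s) x)
      (quadOp (a t) (b t) (d t) (c t)
        (quadOp (A t) (B t) (C t) (D t) fun y => ψ y t) x) t := by
  have product_rule := hasDerivAt_quadOp_time (φ := fun y => ψt y t) (hA t) (hB t) (hC t) (hD t)
    (hψt x t) (hψxt x t) (hψxxt x t)
  have hHψ : quadOp (a t) (b t) (c t) (d t) (fun y => ψ y t) = fun y => I * ψt y t :=
    funext fun y => (hSE y t).symm
  refine (product_rule.const_mul I).congr_deriv ?_
  rw [quadOp_adjoint_comp (a t) (b t) (c t) (d t) (A t) (B t) (C t) (D t)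
    (hψ t) (hψx t) (hψxx t) (hψxxx t), hHψ, quadOp_const_mul, mul_add]

/-- If A, B, C satisfy the system A′ + 4aC − (3c+d)A = 0,
B′ − 4bC + (c+3d)B = 0, C′ + 2(aB − bA) − (c−d)C = 0, and ψ solves i ψ_t = Hψ, then
ψ₁ = (A p² + B x² + C(px + xp))ψ = −Aψ_xx + Bx²ψ − iC(ψ + 2xψ_x) solves the adjoint
equation i (ψ₁)_t = H† ψ₁. -/
theorem statement_7
    (a b c d : ℝ → ℝ) (ha : Continuous a) (hb : Continuous b)
    (hc : Continuous c) (hd : Continuous d)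
    (A B C : ℝ → ℝ)
    -- the first-order system for the coefficients of the quadratic invariant
    (hA : ∀ t, HasDerivAt A ((3 * c t + d t) * A t - 4 * a t * C t) t)
    (hB : ∀ t, HasDerivAt B (4 * b t * C t - (c t + 3 * d t) * B t) t)
    (hC : ∀ t, HasDerivAt C ((c t - d t) * C t - 2 * (a t * B t - b t * A t)) t)
    (ψ ψx ψxx ψxxx ψxxxx ψt ψxt ψxxt : ℝ → ℝ → ℂ)
    -- smoothness of ψ in x (up to the orders appearing)
    (hψx : ∀ x t, HasDerivAt (fun x' => ψ x' t) (ψx x t) x)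
    (hψxx : ∀ x t, HasDerivAt (fun x' => ψx x' t) (ψxx x t) x)
    (hψxxx : ∀ x t, HasDerivAt (fun x' => ψxx x' t) (ψxxx x t) x)
    (hψxxxx : ∀ x t, HasDerivAt (fun x' => ψxxx x' t) (ψxxxx x t) x)
    -- smoothness in t: ψ, ψ_x and ψ_xx are differentiable in t
    (hψt : ∀ x t, HasDerivAt (fun t' => ψ x t') (ψt x t) t)
    (hψxt : ∀ x t, HasDerivAt (fun t' => ψx x t') (ψxt x t) t)
    (hψxxt : ∀ x t, HasDerivAt (fun t' => ψxx x t') (ψxxt x t) t)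
    -- continuity / equality of the mixed partial derivatives
    (hmix1 : ∀ x t, HasDerivAt (fun x' => ψt x' t) (ψxt x t) x)
    (hmix2 : ∀ x t, HasDerivAt (fun x' => ψxt x' t) (ψxxt x t) x)
    -- the time-dependent Schrödinger equation i ψ_t = Hψ
    (hSE : ∀ x t, Complex.I * ψt x t =
        -(a t : ℂ) * ψxx x t + (b t : ℂ) * (x : ℂ) ^ 2 * ψ x t
          - Complex.I * (c t : ℂ) * (ψ x t + (x : ℂ) * ψx x t)
          - Complex.I * (d t : ℂ) * ((x : ℂ) * ψx x t))
    (ψ₁ : ℝ → ℝ → ℂ)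
    (hψ₁ : ∀ x t, ψ₁ x t =
        -(A t : ℂ) * ψxx x t + (B t : ℂ) * (x : ℂ) ^ 2 * ψ x t
          - Complex.I * (C t : ℂ) * (ψ x t + 2 * (x : ℂ) * ψx x t)) :
    -- the adjoint equation i (ψ₁)_t = H† ψ₁
    ∀ x t, Complex.I * deriv (fun t' => ψ₁ x t') t =
        -(a t : ℂ) * deriv (fun x' => deriv (fun x'' => ψ₁ x'' t) x') x
          + (b t : ℂ) * (x : ℂ) ^ 2 * ψ₁ x t
          - Complex.I * (d t : ℂ) * (ψ₁ x t + (x : ℂ) * deriv (fun x' => ψ₁ x' t) x)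
          - Complex.I * (c t : ℂ) * ((x : ℂ) * deriv (fun x' => ψ₁ x' t) x) := by
  obtain rfl : ψx = fun x t => deriv (fun y => ψ y t) x :=
    funext₂ fun x t => (hψx x t).deriv.symm
  obtain rfl : ψxx = fun x t => deriv (deriv fun y => ψ y t) x :=
    funext₂ fun x t => (hψxx x t).deriv.symm
  obtain rfl : ψxxx = fun x t => deriv (deriv (deriv fun y => ψ y t)) x :=
    funext₂ fun x t => (hψxxx x t).deriv.symm
  obtain rfl : ψxt = fun x t => deriv (fun y => ψt y t) x :=
    funext₂ fun x t => (hmix1 x t).deriv.symm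
  obtain rfl : ψxxt = fun x t => deriv (deriv fun y => ψt y t) x :=
    funext₂ fun x t => (hmix2 x t).deriv.symm
  obtain rfl : ψ₁ = fun x t => quadOp (A t) (B t) (C t) (C t) (fun y => ψ y t) x :=
    funext₂ fun x t => by rw [hψ₁, quadOp]; ring
  intro x t
  rw [← deriv_const_mul_field]
  exact (statement_7_general (a := (a ·)) (b := (b ·)) (c := (c ·)) (d := (d ·))
    (fun t => (hA t).ofReal_comp.congr_deriv (by push_cast; ring))
    (fun t => (hB t).ofReal_comp.congr_deriv (by push_cast; ring))
    (fun t => (hC t).ofReal_comp.congr_deriv (by push_cast; rfl))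
    (fun t => (hC t).ofReal_comp.congr_deriv (by push_cast; rfl))
    (fun t x => (hψx x t).differentiableAt) (fun t x => (hψxx x t).differentiableAt)
    (fun t x => (hψxxx x t).differentiableAt) (fun t x => (hψxxxx x t).differentiableAt)
    hψt hψxt hψxxt hSE x t).deriv
end

section
/- Fix t and let a, c, d, κ, κ′ be real numbers with a ≠ 0, κ > 0, let C₀ > 0, and set λ > 0 a positive real (the value of exp(∫₀ᵗ(c−d)ds)), ω = 2√C₀·λ, ρ = ((c+d)κ − κ′)/(2a), θ = −ρ/(2κ), ε = C₀^{1/4}/κ. Define the quadratic invariant acting on smooth f : ℝ → ℂ by (E f)(x) = λ·[−κ² f″(x) − iκρ (f(x) + 2x f′(x)) + (ρ² + C₀/κ²) x² f(x)]. Then for every natural number n, the function Ψₙ(x) = exp(iθx²)·exp(−ε²x²/2)·Hₙ(εx), where Hₙ is the n-th physicists' Hermite polynomial, satisfies (E Ψₙ)(x) = ω(n + 1/2)·Ψₙ(x) for all x ∈ ℝ. -/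
/-- The physicists' Hermite polynomials: H₀ = 1, Hₙ₊₁(ξ) = 2ξHₙ(ξ) − Hₙ′(ξ). -/
noncomputable def physHermite : ℕ → Polynomial ℝ
  | 0 => 1
  | n + 1 => 2 * Polynomial.X * physHermite n - Polynomial.derivative (physHermite n)

/-- Hₙ(x), the n-th physicists' Hermite polynomial evaluated at x. -/
noncomputable def pH (n : ℕ) (x : ℝ) : ℝ := (physHermite n).eval x

/-- ρ = ((c+d)κ − κ′)/(2a). -/
noncomputable def rho9 (a c d κ κ' : ℝ) : ℝ := ((c + d) * κ - κ') / (2 * a)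

/-- θ = −ρ/(2κ). -/
noncomputable def theta9 (a c d κ κ' : ℝ) : ℝ := -(rho9 a c d κ κ') / (2 * κ)

/-- ε = C₀^{1/4}/κ. -/
noncomputable def eps9 (κ C₀ : ℝ) : ℝ := C₀ ^ ((1 : ℝ) / 4) / κ

/-- Ψₙ(x) = exp(iθx²)·exp(−ε²x²/2)·Hₙ(εx). -/
noncomputable def Psi9 (a c d κ κ' C₀ : ℝ) (n : ℕ) (x : ℝ) : ℂ :=
  Complex.exp (Complex.I * (theta9 a c d κ κ' : ℂ) * (x : ℂ) ^ 2) *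
    (Real.exp (-(eps9 κ C₀) ^ 2 * x ^ 2 / 2) : ℂ) * (pH n (eps9 κ C₀ * x) : ℂ)

/-- The quadratic invariant E f = λ·[−κ²f″ − iκρ(f + 2xf′) + (ρ² + C₀/κ²)x²f]. -/
noncomputable def Eop9 (a c d κ κ' C₀ lam : ℝ) (f : ℝ → ℂ) (x : ℝ) : ℂ :=
  (lam : ℂ) * (-(κ : ℂ) ^ 2 * deriv (deriv f) x
    - Complex.I * (κ : ℂ) * (rho9 a c d κ κ' : ℂ) * (f x + 2 * (x : ℂ) * deriv f x)
    + (((rho9 a c d κ κ') ^ 2 + C₀ / κ ^ 2 : ℝ) : ℂ) * (x : ℂ) ^ 2 * f x)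

/-!
The chirp `exp (iθx²)` with `2κθ = -ρ` is a gauge transformation: it conjugates `κp + ρx` into
`κp`, hence the quadratic invariant `λ((κp + ρx)² + (C₀/κ²)x²)` into the harmonic oscillator
`λ(κ²p² + (C₀/κ²)x²)`. Since `κ²ε² = √C₀`, the eigenfunctions of the latter are the Hermite
functions `exp (-ε²x²/2) Hₙ(εx)`.
-/

section PhysHermite

open Polynomial

theorem physHermite_succ (n : ℕ) :
    physHermite (n + 1) = 2 * X * physHermite n - derivative (physHermite n) :=
  rfl

theorem derivative_physHermite_succ (n : ℕ) :
    derivative (physHermite (n + 1)) = 2 * (n + 1 : ℝ[X]) * physHermite n := by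
  induction n with
  | zero => simp [physHermite]
  | succ n ih =>
    calc derivative (physHermite (n + 2))
        = 2 * physHermite (n + 1) + 2 * X * derivative (physHermite (n + 1)) -
            derivative (derivative (physHermite (n + 1))) := by
          simp [physHermite_succ (n + 1)]
      _ = 2 * physHermite (n + 1) +
            2 * (n + 1 : ℝ[X]) * (2 * X * physHermite n - derivative (physHermite n)) := by
          simp only [ih, derivative_mul, derivative_add, derivative_ofNat, derivative_natCast,
            derivative_one]
          ring
      _ = 2 * ((n + 1 : ℕ) + 1 : ℝ[X]) * physHermite (n + 1) := by
          rw [← physHermite_succ]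
          push_cast
          ring

theorem derivative_derivative_physHermite (n : ℕ) :
    derivative (derivative (physHermite n)) =
      2 * X * derivative (physHermite n) - 2 * (n : ℝ[X]) * physHermite n := by
  cases n with
  | zero => simp [physHermite]
  | succ n =>
    simp only [derivative_physHermite_succ, derivative_mul, derivative_add, derivative_ofNat,
      derivative_natCast, derivative_one]
    rw [physHermite_succ]
    push_cast
    ring

end PhysHermite

theorem deriv_ofReal_eval_const_mul (P : Polynomial ℝ) (ε : ℝ) :
    deriv (fun y : ℝ => ((P.eval (ε * y) : ℝ) : ℂ)) =
      fun x : ℝ => (ε : ℂ) * ((P.derivative.eval (ε * x) : ℝ) : ℂ) := by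
  funext x
  have hP : HasDerivAt (fun y : ℝ => P.eval (ε * y)) (P.derivative.eval (ε * x) * ε) x :=
    (P.hasDerivAt (ε * x)).comp x (hasDerivAt_const_mul ε)
  rw [hP.ofReal_comp.deriv, Complex.ofReal_mul, mul_comm]

theorem contDiff_ofReal_eval_const_mul (P : Polynomial ℝ) (ε : ℝ) {k : WithTop ℕ∞} :
    ContDiff ℝ k (fun y : ℝ => ((P.eval (ε * y) : ℝ) : ℂ)) :=
  Complex.ofRealCLM.contDiff.comp
    ((P.contDiff_aeval k).comp (contDiff_const.mul contDiff_id))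

/-- The exponential `exp (αx²)` of a quadratic form on the real line: a chirp when `α` is purely
imaginary, a Gaussian when `α` is a negative real. -/
noncomputable def quadExp (α : ℂ) (x : ℝ) : ℂ := Complex.exp (α * (x : ℂ) ^ 2)

theorem hasDerivAt_quadExp (α : ℂ) (x : ℝ) :
    HasDerivAt (quadExp α) (quadExp α x * (2 * α * x)) x := by
  have hsq : HasDerivAt (fun y : ℝ => α * (y : ℂ) ^ 2) (α * (2 * x)) x := by
    simpa using ((hasDerivAt_id x).ofReal_comp.fun_pow 2).const_mul α
  exact hsq.cexp.congr_deriv (by rw [quadExp]; ring)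

theorem contDiff_quadExp (α : ℂ) {k : WithTop ℕ∞} : ContDiff ℝ k (quadExp α) :=
  (contDiff_const.mul (Complex.ofRealCLM.contDiff.pow 2)).cexp

theorem deriv_quadExp_mul (α : ℂ) {g : ℝ → ℂ} (hg : Differentiable ℝ g) :
    deriv (fun y => quadExp α y * g y) =
      fun x => quadExp α x * (deriv g x + 2 * α * x * g x) := by
  funext x
  rw [((hasDerivAt_quadExp α x).fun_mul (hg x).hasDerivAt).deriv]
  ring

theorem deriv_deriv_quadExp_mul (α : ℂ) {g : ℝ → ℂ} (hg : ContDiff ℝ 2 g) (x : ℝ) :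
    deriv (deriv fun y => quadExp α y * g y) x =
      quadExp α x * (deriv (deriv g) x + 4 * α * x * deriv g x +
        (2 * α + 4 * α ^ 2 * x ^ 2) * g x) := by
  have hg₁ : Differentiable ℝ g := hg.differentiable two_ne_zero
  have hlin (y : ℝ) : HasDerivAt (fun z : ℝ => 2 * α * (z : ℂ)) (2 * α) y := by
    simpa using (hasDerivAt_id y).ofReal_comp.const_mul (2 * α)
  have hinner (y : ℝ) : HasDerivAt (fun z : ℝ => deriv g z + 2 * α * z * g z)
      (deriv (deriv g) y + (2 * α * g y + 2 * α * y * deriv g y)) y :=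
    (hg.differentiable_deriv_two y).hasDerivAt.fun_add ((hlin y).fun_mul (hg₁ y).hasDerivAt)
  rw [deriv_quadExp_mul α hg₁, deriv_quadExp_mul α fun y => (hinner y).differentiableAt]
  beta_reduce
  rw [(hinner x).deriv]
  ring

/-- The (unnormalized) `n`-th Hermite function `exp (-ε²x²/2) Hₙ(εx)` of inverse length `ε`, with
values in `ℂ` so that chirps can act on it. -/
noncomputable def hermiteFun (ε : ℝ) (n : ℕ) (x : ℝ) : ℂ :=
  quadExp (-(ε : ℂ) ^ 2 / 2) x * (pH n (ε * x) : ℂ)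

theorem contDiff_hermiteFun (ε : ℝ) (n : ℕ) {k : WithTop ℕ∞} : ContDiff ℝ k (hermiteFun ε n) :=
  (contDiff_quadExp _).mul (contDiff_ofReal_eval_const_mul (physHermite n) ε)

theorem deriv_deriv_hermiteFun (ε : ℝ) (n : ℕ) (x : ℝ) :
    deriv (deriv (hermiteFun ε n)) x =
      ((ε : ℂ) ^ 4 * x ^ 2 - (ε : ℂ) ^ 2 * (2 * n + 1)) * hermiteFun ε n x := by
  have hode : (((physHermite n).derivative.derivative.eval (ε * x) : ℝ) : ℂ) =
      2 * (ε * x) * (((physHermite n).derivative.eval (ε * x) : ℝ) : ℂ) -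
        2 * n * (((physHermite n).eval (ε * x) : ℝ) : ℂ) := by
    simp [derivative_derivative_physHermite]
  have hderiv := deriv_deriv_quadExp_mul (-(ε : ℂ) ^ 2 / 2)
    (contDiff_ofReal_eval_const_mul (physHermite n) ε) x
  simp only [deriv_ofReal_eval_const_mul, deriv_const_mul_field, hode] at hderiv
  refine hderiv.trans ?_
  rw [hermiteFun, pH]
  ring

theorem sq_mul_eps9_sq {κ C₀ : ℝ} (hκ : κ ≠ 0) (hC₀ : 0 ≤ C₀) :
    κ ^ 2 * eps9 κ C₀ ^ 2 = √C₀ := by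
  have hroot : (C₀ ^ ((1 : ℝ) / 4)) ^ 2 = √C₀ := by
    rw [← Real.rpow_mul_natCast hC₀, Real.sqrt_eq_rpow]
    norm_num
  rw [eps9, div_pow, mul_div_cancel₀ _ (pow_ne_zero 2 hκ), hroot]

theorem sq_mul_eps9_pow_four {κ C₀ : ℝ} (hκ : κ ≠ 0) (hC₀ : 0 ≤ C₀) :
    κ ^ 2 * eps9 κ C₀ ^ 4 = C₀ / κ ^ 2 := by
  rw [eq_div_iff (pow_ne_zero 2 hκ)]
  calc κ ^ 2 * eps9 κ C₀ ^ 4 * κ ^ 2 = (κ ^ 2 * eps9 κ C₀ ^ 2) ^ 2 := by ring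
    _ = C₀ := by rw [sq_mul_eps9_sq hκ hC₀, Real.sq_sqrt hC₀]

section QuadraticInvariant

variable (a c d κ' : ℝ)

theorem Eop9_chirp_mul {κ : ℝ} (hκ : κ ≠ 0) (C₀ lam : ℝ) {g : ℝ → ℂ} (hg : ContDiff ℝ 2 g)
    (x : ℝ) :
    Eop9 a c d κ κ' C₀ lam (fun y => quadExp (Complex.I * theta9 a c d κ κ') y * g y) x =
      quadExp (Complex.I * theta9 a c d κ κ') x *
        (lam * (-(κ : ℂ) ^ 2 * deriv (deriv g) x + (C₀ / κ ^ 2 : ℝ) * (x : ℂ) ^ 2 * g x)) := by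
  have hρ : rho9 a c d κ κ' = -(2 * κ * theta9 a c d κ κ') := by
    rw [theta9]
    field_simp
  rw [Eop9, deriv_deriv_quadExp_mul _ hg, deriv_quadExp_mul _ (hg.differentiable two_ne_zero), hρ]
  generalize theta9 a c d κ κ' = θ
  push_cast
  linear_combination
    (4 * lam * κ ^ 2 * θ ^ 2 * x ^ 2 * g x * quadExp (Complex.I * θ) x) * Complex.I_sq

theorem Psi9_eq_chirp_mul_hermiteFun (κ C₀ : ℝ) (n : ℕ) :
    Psi9 a c d κ κ' C₀ n =
      fun y => quadExp (Complex.I * theta9 a c d κ κ') y * hermiteFun (eps9 κ C₀) n y := by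
  funext y
  rw [Psi9, hermiteFun, quadExp, quadExp, mul_assoc]
  push_cast
  ring_nf

end QuadraticInvariant

/-- the functions Ψₙ(x) = exp(iθx²)exp(−ε²x²/2)Hₙ(εx) are eigenfunctions
of the quadratic invariant E with eigenvalues ω(n + 1/2), ω = 2√C₀·λ. -/
theorem statement_9
    (a c d κ κ' C₀ lam : ℝ)
    (ha : a ≠ 0) (hκ : 0 < κ) (hC₀ : 0 < C₀) (hlam : 0 < lam) :
    ∀ n : ℕ, ∀ x : ℝ,
      Eop9 a c d κ κ' C₀ lam (Psi9 a c d κ κ' C₀ n) x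
        = ((2 * Real.sqrt C₀ * lam : ℝ) : ℂ) * ((n : ℂ) + 1 / 2)
            * Psi9 a c d κ κ' C₀ n x := by
  intro n x
  have hε₂ : (κ : ℂ) ^ 2 * (eps9 κ C₀ : ℂ) ^ 2 = (√C₀ : ℝ) :=
    mod_cast sq_mul_eps9_sq hκ.ne' hC₀.le
  have hε₄ : (κ : ℂ) ^ 2 * (eps9 κ C₀ : ℂ) ^ 4 = (C₀ / κ ^ 2 : ℝ) :=
    mod_cast sq_mul_eps9_pow_four hκ.ne' hC₀.le
  rw [Psi9_eq_chirp_mul_hermiteFun, Eop9_chirp_mul a c d κ' hκ.ne' C₀ lam (contDiff_hermiteFun _ n),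
    deriv_deriv_hermiteFun, ← hε₄, Complex.ofReal_mul, Complex.ofReal_mul, ← hε₂]
  push_cast
  ring
end

section
/- (Pinney's nonlinear superposition.) Let a, b, c, d : ℝ → ℝ with a, c, d continuously differentiable, b continuous, a(t) ≠ 0 on an open interval I, and let Q(t) = 4ab + (a′/a − c − d)(c+d) − c′ − d′. Let κ₁, κ₂ : I → ℝ be twice continuously differentiable solutions of the homogeneous equation κ′′ − (a′/a)κ′ + Qκ = 0, with Wronskian W(t) = κ₁κ₂′ − κ₁′κ₂. Then: (i) W(t)/(2a(t)) is constant on I; (ii) if C₁, C₂, C₃ are real constants with C₁κ₁(t)² + C₂κ₂(t)² + 2C₃κ₁(t)κ₂(t) > 0 on I, then κ(t) := √(C₁κ₁² + C₂κ₂² + 2C₃κ₁κ₂) satisfies the auxiliary equation κ′′ − (a′/a)κ′ + Qκ = C₀(2a)²/κ³ on I, where C₀ = (C₁C₂ − C₃²)·(W/(2a))². -/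
/-- Q(t) = 4ab + (a′/a − c − d)(c+d) − c′ − d′. -/
noncomputable def Qfun (a b c d : ℝ → ℝ) (t : ℝ) : ℝ :=
  4 * a t * b t + (deriv a t / a t - c t - d t) * (c t + d t) - deriv c t - deriv d t

/-- The Wronskian W = κ₁κ₂′ − κ₁′κ₂. -/
noncomputable def Wfun (κ₁ κ₂ : ℝ → ℝ) (t : ℝ) : ℝ :=
  κ₁ t * deriv κ₂ t - deriv κ₁ t * κ₂ t

/-!
Write `L κ = κ'' - p κ' + q κ` and let `B` be the symmetric bilinear form on `ℝ²` with Gram matrix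
`[[C₁, C₃], [C₃, C₂]]`. For the curve `x = (κ₁, κ₂)` the equation `L x = 0` turns the derivatives of
`f = B x x` into `f' / 2 = B x x'` and `f'' / 2 - p f' / 2 + q f = B x' x'`, so that
`L √f = (B x x * B x' x' - (B x x')²) / √f ³`. The numerator is a Gram determinant and therefore
equals `det B` times the square of the Wronskian `W`. For `p = a' / a`, Abel's identity `W' = p W`
makes `W / a` constant.
-/

open Topology

section BinaryForm

variable {R : Type*} [CommRing R] (C₁ C₂ C₃ : R)

/-- The symmetric bilinear form on pairs whose quadratic form is
`C₁ x₁² + C₂ x₂² + 2 C₃ x₁ x₂`. -/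
def binaryForm (x y : R × R) : R :=
  C₁ * (x.1 * y.1) + C₂ * (x.2 * y.2) + C₃ * (x.1 * y.2 + x.2 * y.1)

theorem binaryForm_self (x : R × R) :
    binaryForm C₁ C₂ C₃ x x = C₁ * x.1 ^ 2 + C₂ * x.2 ^ 2 + 2 * C₃ * x.1 * x.2 := by
  unfold binaryForm
  ring

theorem binaryForm_comm (x y : R × R) :
    binaryForm C₁ C₂ C₃ x y = binaryForm C₁ C₂ C₃ y x := by
  unfold binaryForm
  ring

theorem binaryForm_gram_det (x y : R × R) :
    binaryForm C₁ C₂ C₃ x x * binaryForm C₁ C₂ C₃ y y - binaryForm C₁ C₂ C₃ x y ^ 2 =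
      (C₁ * C₂ - C₃ ^ 2) * (x.1 * y.2 - y.1 * x.2) ^ 2 := by
  unfold binaryForm
  ring

end BinaryForm

theorem hasDerivAt_binaryForm {𝕜 : Type*} [NontriviallyNormedField 𝕜] (C₁ C₂ C₃ : 𝕜)
    {x y : 𝕜 → 𝕜 × 𝕜} {x' y' : 𝕜 × 𝕜} {t : 𝕜} (hx : HasDerivAt x x' t) (hy : HasDerivAt y y' t) :
    HasDerivAt (fun s => binaryForm C₁ C₂ C₃ (x s) (y s))
      (binaryForm C₁ C₂ C₃ x' (y t) + binaryForm C₁ C₂ C₃ (x t) y') t := by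
  have hx₁ : HasDerivAt (fun s => (x s).1) x'.1 t :=
    (ContinuousLinearMap.fst 𝕜 𝕜 𝕜).hasFDerivAt.comp_hasDerivAt t hx
  have hx₂ : HasDerivAt (fun s => (x s).2) x'.2 t :=
    (ContinuousLinearMap.snd 𝕜 𝕜 𝕜).hasFDerivAt.comp_hasDerivAt t hx
  have hy₁ : HasDerivAt (fun s => (y s).1) y'.1 t :=
    (ContinuousLinearMap.fst 𝕜 𝕜 𝕜).hasFDerivAt.comp_hasDerivAt t hy
  have hy₂ : HasDerivAt (fun s => (y s).2) y'.2 t :=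
    (ContinuousLinearMap.snd 𝕜 𝕜 𝕜).hasFDerivAt.comp_hasDerivAt t hy
  have h := (((hx₁.mul hy₁).const_mul C₁).add ((hx₂.mul hy₂).const_mul C₂)).add
    (((hx₁.mul hy₂).add (hx₂.mul hy₁)).const_mul C₃)
  refine h.congr_deriv ?_
  unfold binaryForm
  ring

theorem div_eq_div_of_hasDerivAt_logDeriv_mul {𝕜 : Type*} [RCLike 𝕜] {a u : 𝕜 → 𝕜} {I : Set 𝕜}
    (hI : IsOpen I) (hconn : IsPreconnected I) (ha : DifferentiableOn 𝕜 a I)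
    (ha₀ : ∀ t ∈ I, a t ≠ 0) (hu : ∀ t ∈ I, HasDerivAt u (logDeriv a t * u t) t)
    {s t : 𝕜} (hs : s ∈ I) (ht : t ∈ I) :
    u s / a s = u t / a t := by
  have hderiv : ∀ r ∈ I, HasDerivAt (fun r => u r / a r) 0 r := fun r hr => by
    have har := ha₀ r hr
    refine ((hu r hr).div (ha.differentiableAt (hI.mem_nhds hr)).hasDerivAt har).congr_deriv ?_
    rw [logDeriv_apply]
    field_simp
    ring
  exact hI.is_const_of_deriv_eq_zero (f := fun r => u r / a r) hconn
    (fun r hr => (hderiv r hr).differentiableAt.differentiableWithinAt)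
    (fun r hr => (hderiv r hr).deriv) hs ht

/-- The linear operator `κ ↦ κ'' - p κ' + q κ` on the left of the auxiliary equation, where
`p = a' / a`. -/
noncomputable def auxiliaryOp (p q κ : ℝ → ℝ) (t : ℝ) : ℝ :=
  deriv (deriv κ) t - p t * deriv κ t + q t * κ t

theorem auxiliaryOp_sqrt (p q : ℝ → ℝ) {f g : ℝ → ℝ} {g' t : ℝ}
    (hf : ∀ᶠ s in 𝓝 t, HasDerivAt f (2 * g s) s) (hg : HasDerivAt g g' t) (hpos : 0 < f t) :
    auxiliaryOp p q (fun s => √(f s)) t =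
      (f t * (g' - p t * g t + q t * f t) - g t ^ 2) / √(f t) ^ 3 := by
  have hsqrt : ∀ᶠ s in 𝓝 t, HasDerivAt (fun s => √(f s)) (g s / √(f s)) s := by
    have hf_ne : ∀ᶠ s in 𝓝 t, f s ≠ 0 := hf.self_of_nhds.continuousAt.eventually_ne hpos.ne'
    filter_upwards [hf, hf_ne] with s hs hs_ne
    exact (hs.sqrt hs_ne).congr_deriv (mul_div_mul_left _ _ two_ne_zero)
  have hr : √(f t) ≠ 0 := (Real.sqrt_pos.mpr hpos).ne'
  have hderiv : deriv (fun s => √(f s)) =ᶠ[𝓝 t] fun s => g s / √(f s) :=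
    hsqrt.mono fun _ hs => hs.deriv
  have hderiv₂ : deriv (deriv fun s => √(f s)) t =
      (g' * √(f t) - g t * (g t / √(f t))) / √(f t) ^ 2 :=
    hderiv.deriv_eq.trans (hg.div hsqrt.self_of_nhds hr).deriv
  simp only [auxiliaryOp, hderiv₂, hderiv.self_of_nhds]
  have hsq : f t = √(f t) ^ 2 := (Real.sq_sqrt hpos.le).symm
  generalize √(f t) = r at hr hsq ⊢
  rw [hsq]
  field_simp
  ring

/-- `κ` is a twice differentiable solution of `κ'' - p κ' + q κ = 0` on `I`. Derivatives are
two-sided, so the notion is meant for open `I`. -/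
structure IsHomogeneousSolOn (p q : ℝ → ℝ) (I : Set ℝ) (κ : ℝ → ℝ) : Prop where
  differentiableAt : ∀ t ∈ I, DifferentiableAt ℝ κ t
  differentiableAt_deriv : ∀ t ∈ I, DifferentiableAt ℝ (deriv κ) t
  auxiliaryOp_eq_zero : ∀ t ∈ I, auxiliaryOp p q κ t = 0

namespace IsHomogeneousSolOn

variable {p q κ κ₁ κ₂ : ℝ → ℝ} {I : Set ℝ} {t : ℝ}

theorem of_contDiffOn (hI : IsOpen I) (hκ : ContDiffOn ℝ 2 κ I)
    (hzero : ∀ t ∈ I, auxiliaryOp p q κ t = 0) : IsHomogeneousSolOn p q I κ where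
  differentiableAt _ ht :=
    (hκ.differentiableOn two_ne_zero).differentiableAt (hI.mem_nhds ht)
  differentiableAt_deriv _ ht :=
    ((hκ.deriv_of_isOpen hI (m := 1) (by norm_num)).differentiableOn
      one_ne_zero).differentiableAt (hI.mem_nhds ht)
  auxiliaryOp_eq_zero := hzero

theorem hasDerivAt_deriv (h : IsHomogeneousSolOn p q I κ) (ht : t ∈ I) :
    HasDerivAt (deriv κ) (p t * deriv κ t - q t * κ t) t := by
  refine (h.differentiableAt_deriv t ht).hasDerivAt.congr_deriv ?_
  have hzero : deriv (deriv κ) t - p t * deriv κ t + q t * κ t = 0 :=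
    h.auxiliaryOp_eq_zero t ht
  linear_combination hzero

theorem hasDerivAt_wronskian (h₁ : IsHomogeneousSolOn p q I κ₁)
    (h₂ : IsHomogeneousSolOn p q I κ₂) (ht : t ∈ I) :
    HasDerivAt (Wfun κ₁ κ₂) (p t * Wfun κ₁ κ₂ t) t := by
  have h := ((h₁.differentiableAt t ht).hasDerivAt.mul (h₂.hasDerivAt_deriv ht)).sub
    ((h₁.hasDerivAt_deriv ht).mul (h₂.differentiableAt t ht).hasDerivAt)
  refine h.congr_deriv ?_
  unfold Wfun
  ring

theorem auxiliaryOp_sqrt_binaryForm (hI : IsOpen I) (h₁ : IsHomogeneousSolOn p q I κ₁)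
    (h₂ : IsHomogeneousSolOn p q I κ₂) (C₁ C₂ C₃ : ℝ) (ht : t ∈ I)
    (hpos : 0 < binaryForm C₁ C₂ C₃ (κ₁ t, κ₂ t) (κ₁ t, κ₂ t)) :
    auxiliaryOp p q (fun s => √(binaryForm C₁ C₂ C₃ (κ₁ s, κ₂ s) (κ₁ s, κ₂ s))) t =
      (C₁ * C₂ - C₃ ^ 2) * Wfun κ₁ κ₂ t ^ 2 /
        √(binaryForm C₁ C₂ C₃ (κ₁ t, κ₂ t) (κ₁ t, κ₂ t)) ^ 3 := by
  set B := binaryForm C₁ C₂ C₃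
  set x : ℝ → ℝ × ℝ := fun s => (κ₁ s, κ₂ s)
  set v : ℝ → ℝ × ℝ := fun s => (deriv κ₁ s, deriv κ₂ s)
  set w : ℝ × ℝ := (p t * deriv κ₁ t - q t * κ₁ t, p t * deriv κ₂ t - q t * κ₂ t)
  have hx : ∀ s ∈ I, HasDerivAt x (v s) s := fun s hs =>
    (h₁.differentiableAt s hs).hasDerivAt.prodMk (h₂.differentiableAt s hs).hasDerivAt
  have hv : HasDerivAt v w t := (h₁.hasDerivAt_deriv ht).prodMk (h₂.hasDerivAt_deriv ht)
  have hBxx : ∀ᶠ s in 𝓝 t, HasDerivAt (fun s => B (x s) (x s)) (2 * B (x s) (v s)) s := by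
    filter_upwards [hI.mem_nhds ht] with s hs
    refine (hasDerivAt_binaryForm C₁ C₂ C₃ (hx s hs) (hx s hs)).congr_deriv ?_
    rw [binaryForm_comm, two_mul]
  have hBxv : HasDerivAt (fun s => B (x s) (v s)) (B (v t) (v t) + B (x t) w) t :=
    hasDerivAt_binaryForm C₁ C₂ C₃ (hx t ht) hv
  have hBxw : B (x t) w = p t * B (x t) (v t) - q t * B (x t) (x t) := by
    simp only [B, x, v, w, binaryForm]
    ring
  calc auxiliaryOp p q (fun s => √(B (x s) (x s))) t
      = (B (x t) (x t) * (B (v t) (v t) + B (x t) w - p t * B (x t) (v t)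
          + q t * B (x t) (x t)) - B (x t) (v t) ^ 2) / √(B (x t) (x t)) ^ 3 :=
        auxiliaryOp_sqrt p q hBxx hBxv hpos
    _ = (B (x t) (x t) * B (v t) (v t) - B (x t) (v t) ^ 2) / √(B (x t) (x t)) ^ 3 := by
        rw [hBxw]
        ring
    _ = (C₁ * C₂ - C₃ ^ 2) * Wfun κ₁ κ₂ t ^ 2 / √(B (x t) (x t)) ^ 3 := by
        rw [binaryForm_gram_det, Wfun]

end IsHomogeneousSolOn

theorem statement_11_general {a q κ₁ κ₂ : ℝ → ℝ} {I : Set ℝ} (hI : IsOpen I)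
    (hconn : IsPreconnected I) (ha : DifferentiableOn ℝ a I) (ha₀ : ∀ t ∈ I, a t ≠ 0)
    (h₁ : IsHomogeneousSolOn (logDeriv a) q I κ₁)
    (h₂ : IsHomogeneousSolOn (logDeriv a) q I κ₂) (C₁ C₂ C₃ : ℝ) :
    (∀ s ∈ I, ∀ t ∈ I, Wfun κ₁ κ₂ s / (2 * a s) = Wfun κ₁ κ₂ t / (2 * a t)) ∧
    (∀ t ∈ I, 0 < C₁ * κ₁ t ^ 2 + C₂ * κ₂ t ^ 2 + 2 * C₃ * κ₁ t * κ₂ t →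
      auxiliaryOp (logDeriv a) q
          (fun s => √(C₁ * κ₁ s ^ 2 + C₂ * κ₂ s ^ 2 + 2 * C₃ * κ₁ s * κ₂ s)) t =
        ((C₁ * C₂ - C₃ ^ 2) * (Wfun κ₁ κ₂ t / (2 * a t)) ^ 2) * (2 * a t) ^ 2
          / √(C₁ * κ₁ t ^ 2 + C₂ * κ₂ t ^ 2 + 2 * C₃ * κ₁ t * κ₂ t) ^ 3) := by
  refine ⟨fun s hs t ht => ?_, fun t ht hpos => ?_⟩
  · rw [div_mul_eq_div_div_swap, div_mul_eq_div_div_swap,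
      div_eq_div_of_hasDerivAt_logDeriv_mul hI hconn ha ha₀
        (fun _ hr => h₁.hasDerivAt_wronskian h₂ hr) hs ht]
  · have hκ := h₁.auxiliaryOp_sqrt_binaryForm hI h₂ C₁ C₂ C₃ ht
    simp only [binaryForm_self] at hκ
    rw [hκ hpos, mul_assoc (C₁ * C₂ - C₃ ^ 2), ← mul_pow,
      div_mul_cancel₀ _ (mul_ne_zero two_ne_zero (ha₀ t ht))]

/-- Pinney's nonlinear superposition: for two solutions κ₁, κ₂ of the
homogeneous equation κ′′ − (a′/a)κ′ + Qκ = 0 on an open interval (t₁,t₂):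
(i) W/(2a) is constant; (ii) κ = √(C₁κ₁² + C₂κ₂² + 2C₃κ₁κ₂) solves the auxiliary
equation κ′′ − (a′/a)κ′ + Qκ = C₀(2a)²/κ³ with C₀ = (C₁C₂ − C₃²)(W/(2a))². -/
theorem statement_11
    (a b c d κ₁ κ₂ : ℝ → ℝ) (t₁ t₂ : ℝ) (C₁ C₂ C₃ : ℝ)
    (ha : ContDiff ℝ 1 a) (hc : ContDiff ℝ 1 c) (hd : ContDiff ℝ 1 d)
    (hb : Continuous b)
    (hane : ∀ t ∈ Set.Ioo t₁ t₂, a t ≠ 0)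
    (hκ₁ : ContDiffOn ℝ 2 κ₁ (Set.Ioo t₁ t₂)) (hκ₂ : ContDiffOn ℝ 2 κ₂ (Set.Ioo t₁ t₂))
    (hEq1 : ∀ t ∈ Set.Ioo t₁ t₂, deriv (deriv κ₁) t - (deriv a t / a t) * deriv κ₁ t
        + Qfun a b c d t * κ₁ t = 0)
    (hEq2 : ∀ t ∈ Set.Ioo t₁ t₂, deriv (deriv κ₂) t - (deriv a t / a t) * deriv κ₂ t
        + Qfun a b c d t * κ₂ t = 0)
    (hpos : ∀ t ∈ Set.Ioo t₁ t₂,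
        0 < C₁ * κ₁ t ^ 2 + C₂ * κ₂ t ^ 2 + 2 * C₃ * κ₁ t * κ₂ t) :
    -- (i) W/(2a) is constant on the interval
    (∀ s ∈ Set.Ioo t₁ t₂, ∀ t ∈ Set.Ioo t₁ t₂,
        Wfun κ₁ κ₂ s / (2 * a s) = Wfun κ₁ κ₂ t / (2 * a t)) ∧
    -- (ii) κ = √(C₁κ₁² + C₂κ₂² + 2C₃κ₁κ₂) solves the auxiliary equation
    (∀ t ∈ Set.Ioo t₁ t₂,
        deriv (deriv fun s =>
            Real.sqrt (C₁ * κ₁ s ^ 2 + C₂ * κ₂ s ^ 2 + 2 * C₃ * κ₁ s * κ₂ s)) t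
          - (deriv a t / a t) * deriv (fun s =>
              Real.sqrt (C₁ * κ₁ s ^ 2 + C₂ * κ₂ s ^ 2 + 2 * C₃ * κ₁ s * κ₂ s)) t
          + Qfun a b c d t *
              Real.sqrt (C₁ * κ₁ t ^ 2 + C₂ * κ₂ t ^ 2 + 2 * C₃ * κ₁ t * κ₂ t)
        = ((C₁ * C₂ - C₃ ^ 2) * (Wfun κ₁ κ₂ t / (2 * a t)) ^ 2) * (2 * a t) ^ 2
            / Real.sqrt (C₁ * κ₁ t ^ 2 + C₂ * κ₂ t ^ 2 + 2 * C₃ * κ₁ t * κ₂ t) ^ 3) := by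
  have h := statement_11_general isOpen_Ioo isPreconnected_Ioo
    (ha.differentiable one_ne_zero).differentiableOn hane
    (.of_contDiffOn isOpen_Ioo hκ₁ hEq1) (.of_contDiffOn isOpen_Ioo hκ₂ hEq2) C₁ C₂ C₃
  exact ⟨h.1, fun t ht => h.2 t ht (hpos t ht)⟩
end

section
/- (General nonlinear superposition principle for Ermakov's equations.) Let a, b, c, d : ℝ → ℝ with a, c, d continuously differentiable, b continuous, a(t) ≠ 0 on an open interval I, and Q(t) = 4ab + (a′/a − c − d)(c+d) − c′ − d′. Let κ₁, κ₂ : I → ℝ be twice continuously differentiable nonvanishing solutions of the Ermakov equations κᵢ′′ − (a′/a)κᵢ′ + Qκᵢ = C₀⁽ⁱ⁾(2a)²/κᵢ³ (i = 1, 2) with real constants C₀⁽¹⁾, C₀⁽²⁾, and set W = κ₁κ₂′ − κ₁′κ₂ and J(t) = (W/(2a))² + C₀⁽¹⁾(κ₂/κ₁)² + C₀⁽²⁾(κ₁/κ₂)². Let D₁, D₂ be real constants with D₁κ₁(t)² + D₂κ₂(t)² > 0 on I and set κ(t) := √(D₁κ₁² + D₂κ₂²). Then J is constant on I, and κ satisfies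 the Ermakov equation κ′′ − (a′/a)κ′ + Qκ = C₀(2a)²/κ³ on I with constant C₀ = C₀⁽¹⁾D₁² + C₀⁽²⁾D₂² + D₁D₂·J. -/
/-- J(t) = (W/(2a))² + C₀⁽¹⁾(κ₂/κ₁)² + C₀⁽²⁾(κ₁/κ₂)². -/
noncomputable def Jfun (a κ₁ κ₂ : ℝ → ℝ) (C₀₁ C₀₂ : ℝ) (t : ℝ) : ℝ :=
  (Wfun κ₁ κ₂ t / (2 * a t)) ^ 2 + C₀₁ * (κ₂ t / κ₁ t) ^ 2 + C₀₂ * (κ₁ t / κ₂ t) ^ 2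

/-!
Put `u = κ²`. Multiplied by `4κ³`, the left-hand side of the Ermakov equation becomes the quadratic
form `2uu″ - u′² - 2(a′/a)uu′ + 4Qu²` in `u`, so that `κ` is a solution with constant `C` exactly
when this form takes the value `4C(2a)²` at `u`. At `D₁κ₁² + D₂κ₂²` the form is found by
polarization, and its polar form at `κ₁², κ₂²` is `2(2a)²J`. That `J` is constant follows from
`(W/(2a))′ = 2a(C₂κ₁/κ₂³ - C₁κ₂/κ₁³)` and `(κ₂/κ₁)′ = W/κ₁²`.
-/

open Topology

section Calculus

variable {𝕜 : Type*} [NontriviallyNormedField 𝕜] {f g : 𝕜 → 𝕜} {t : 𝕜}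

lemma hasDerivAt_deriv_of_contDiffAt_two (hf : ContDiffAt 𝕜 2 f t) :
    HasDerivAt (deriv f) (deriv (deriv f) t) t :=
  ((hf.derivWithin (m := 1) one_add_one_eq_two.le).differentiableAt one_ne_zero).hasDerivAt

lemma deriv_deriv_fun_sq (hf : ContDiffAt 𝕜 2 f t) :
    deriv (deriv fun s => f s ^ 2) t = 2 * (deriv f t ^ 2 + f t * deriv (deriv f) t) := by
  have hderiv : deriv (fun s => f s ^ 2) =ᶠ[𝓝 t] fun s => 2 * (f s * deriv f s) := by
    filter_upwards [hf.eventually (by simp)] with s hs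
    rw [deriv_fun_pow (hs.differentiableAt two_ne_zero)]
    push_cast
    ring
  have hf' := (hf.differentiableAt two_ne_zero).hasDerivAt
  have hmul := (hf'.fun_mul (hasDerivAt_deriv_of_contDiffAt_two hf)).const_mul 2
  rw [hderiv.deriv_eq, hmul.deriv]
  ring

lemma deriv_fun_const_mul_add_const_mul (hf : DifferentiableAt 𝕜 f t)
    (hg : DifferentiableAt 𝕜 g t) (α β : 𝕜) :
    deriv (fun s => α * f s + β * g s) t = α * deriv f t + β * deriv g t :=
  ((hf.hasDerivAt.const_mul α).add (hg.hasDerivAt.const_mul β)).deriv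

lemma deriv_deriv_fun_const_mul_add_const_mul (hf : ContDiffAt 𝕜 2 f t)
    (hg : ContDiffAt 𝕜 2 g t) (α β : 𝕜) :
    deriv (deriv fun s => α * f s + β * g s) t
      = α * deriv (deriv f) t + β * deriv (deriv g) t := by
  have hderiv : deriv (fun s => α * f s + β * g s)
      =ᶠ[𝓝 t] fun s => α * deriv f s + β * deriv g s := by
    filter_upwards [hf.eventually (by simp), hg.eventually (by simp)] with s hfs hgs
    exact deriv_fun_const_mul_add_const_mul (hfs.differentiableAt two_ne_zero)
      (hgs.differentiableAt two_ne_zero) α β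
  rw [hderiv.deriv_eq, deriv_fun_const_mul_add_const_mul
    (hasDerivAt_deriv_of_contDiffAt_two hf).differentiableAt
    (hasDerivAt_deriv_of_contDiffAt_two hg).differentiableAt]

end Calculus

/-- The linear differential operator `κ ↦ κ″ - (a′/a)κ′ + Qκ` on the left-hand side of the Ermakov
equation, with an arbitrary coefficient `Q`. -/
noncomputable def ermakovOp (a Q κ : ℝ → ℝ) (t : ℝ) : ℝ :=
  deriv (deriv κ) t - deriv a t / a t * deriv κ t + Q t * κ t

/-- `κ` is, at the point `t`, a nonvanishing `C²` solution of the Ermakov equation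
`κ″ - (a′/a)κ′ + Qκ = C(2a)²/κ³`. A solution on a set is a solution at each of its points. -/
structure IsErmakovSolutionAt (a Q : ℝ → ℝ) (C : ℝ) (κ : ℝ → ℝ) (t : ℝ) : Prop where
  contDiffAt : ContDiffAt ℝ 2 κ t
  ne_zero : κ t ≠ 0
  ermakovOp_eq : ermakovOp a Q κ t = C * (2 * a t) ^ 2 / κ t ^ 3

/-- The symmetric bilinear form whose diagonal `2uu″ - u′² - 2(a′/a)uu′ + 4Qu²` is `4κ³` times
`ermakovOp a Q κ` at `u = κ²`. -/
noncomputable def ermakovForm (a Q u v : ℝ → ℝ) (t : ℝ) : ℝ :=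
  u t * deriv (deriv v) t + deriv (deriv u) t * v t - deriv u t * deriv v t
    - deriv a t / a t * (u t * deriv v t + deriv u t * v t) + 4 * Q t * (u t * v t)

section Form

variable {a Q κ κ₁ κ₂ u v : ℝ → ℝ} {C C₁ C₂ t : ℝ}

lemma ermakovForm_self_congr (h : u =ᶠ[𝓝 t] v) :
    ermakovForm a Q u u t = ermakovForm a Q v v t := by
  simp only [ermakovForm, h.eq_of_nhds, h.deriv_eq, h.deriv.deriv_eq]

lemma ermakovForm_self_const_mul_add_const_mul (hu : ContDiffAt ℝ 2 u t)
    (hv : ContDiffAt ℝ 2 v t) (α β : ℝ) :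
    ermakovForm a Q (fun s => α * u s + β * v s) (fun s => α * u s + β * v s) t
      = α ^ 2 * ermakovForm a Q u u t + β ^ 2 * ermakovForm a Q v v t
        + 2 * (α * β) * ermakovForm a Q u v t := by
  simp only [ermakovForm, deriv_deriv_fun_const_mul_add_const_mul hu hv,
    deriv_fun_const_mul_add_const_mul (hu.differentiableAt two_ne_zero)
      (hv.differentiableAt two_ne_zero)]
  ring

lemma ermakovForm_sq_sq (h₁ : ContDiffAt ℝ 2 κ₁ t) (h₂ : ContDiffAt ℝ 2 κ₂ t) :
    ermakovForm a Q (fun s => κ₁ s ^ 2) (fun s => κ₂ s ^ 2) t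
      = 2 * Wfun κ₁ κ₂ t ^ 2 + 2 * (κ₁ t * κ₂ t)
        * (κ₁ t * ermakovOp a Q κ₂ t + κ₂ t * ermakovOp a Q κ₁ t) := by
  simp only [ermakovForm, ermakovOp, Wfun, deriv_deriv_fun_sq h₁, deriv_deriv_fun_sq h₂,
    deriv_fun_pow (h₁.differentiableAt two_ne_zero),
    deriv_fun_pow (h₂.differentiableAt two_ne_zero)]
  push_cast
  ring

lemma ermakovForm_sq_self (h : ContDiffAt ℝ 2 κ t) :
    ermakovForm a Q (fun s => κ s ^ 2) (fun s => κ s ^ 2) t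
      = 4 * κ t ^ 3 * ermakovOp a Q κ t := by
  rw [ermakovForm_sq_sq h h, Wfun]
  ring

lemma IsErmakovSolutionAt.ermakovForm_sq_self_eq (h : IsErmakovSolutionAt a Q C κ t) :
    ermakovForm a Q (fun s => κ s ^ 2) (fun s => κ s ^ 2) t = 4 * C * (2 * a t) ^ 2 := by
  have hκ := h.ne_zero
  rw [ermakovForm_sq_self h.contDiffAt, h.ermakovOp_eq]
  field_simp

lemma IsErmakovSolutionAt.ermakovForm_sq_sq_eq (ha : a t ≠ 0)
    (h₁ : IsErmakovSolutionAt a Q C₁ κ₁ t) (h₂ : IsErmakovSolutionAt a Q C₂ κ₂ t) :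
    ermakovForm a Q (fun s => κ₁ s ^ 2) (fun s => κ₂ s ^ 2) t
      = 2 * (2 * a t) ^ 2 * Jfun a κ₁ κ₂ C₁ C₂ t := by
  have hκ₁ := h₁.ne_zero
  have hκ₂ := h₂.ne_zero
  rw [ermakovForm_sq_sq h₁.contDiffAt h₂.contDiffAt, h₁.ermakovOp_eq, h₂.ermakovOp_eq, Jfun]
  field_simp
  ring

lemma isErmakovSolutionAt_sqrt (hu : ContDiffAt ℝ 2 u t) (hpos : 0 < u t)
    (hform : ermakovForm a Q u u t = 4 * C * (2 * a t) ^ 2) :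
    IsErmakovSolutionAt a Q C (fun s => √(u s)) t := by
  have hsqrt : ContDiffAt ℝ 2 (fun s => √(u s)) t := hu.sqrt hpos.ne'
  have hne : √(u t) ≠ 0 := (Real.sqrt_pos.2 hpos).ne'
  have hsq : (fun s => √(u s) ^ 2) =ᶠ[𝓝 t] u := by
    filter_upwards [hu.continuousAt.eventually_const_lt hpos] with s hs using Real.sq_sqrt hs.le
  have hop : 4 * √(u t) ^ 3 * ermakovOp a Q (fun s => √(u s)) t = 4 * C * (2 * a t) ^ 2 := by
    rw [← ermakovForm_sq_self hsqrt, ermakovForm_self_congr hsq, hform]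
  refine ⟨hsqrt, hne, ?_⟩
  rw [eq_div_iff (pow_ne_zero 3 hne)]
  linarith

lemma IsErmakovSolutionAt.sqrt_superposition (ha : a t ≠ 0)
    (h₁ : IsErmakovSolutionAt a Q C₁ κ₁ t) (h₂ : IsErmakovSolutionAt a Q C₂ κ₂ t) {D₁ D₂ : ℝ}
    (hpos : 0 < D₁ * κ₁ t ^ 2 + D₂ * κ₂ t ^ 2) :
    IsErmakovSolutionAt a Q (C₁ * D₁ ^ 2 + C₂ * D₂ ^ 2 + D₁ * D₂ * Jfun a κ₁ κ₂ C₁ C₂ t)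
      (fun s => √(D₁ * κ₁ s ^ 2 + D₂ * κ₂ s ^ 2)) t := by
  have hsq₁ := h₁.contDiffAt.pow 2
  have hsq₂ := h₂.contDiffAt.pow 2
  refine isErmakovSolutionAt_sqrt
    ((contDiffAt_const.mul hsq₁).add (contDiffAt_const.mul hsq₂)) hpos ?_
  rw [ermakovForm_self_const_mul_add_const_mul hsq₁ hsq₂, h₁.ermakovForm_sq_self_eq,
    h₂.ermakovForm_sq_self_eq, h₁.ermakovForm_sq_sq_eq ha h₂]
  ring

end Form

section Invariant

variable {a Q κ₁ κ₂ : ℝ → ℝ} {C₁ C₂ t : ℝ}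

lemma hasDerivAt_Wfun (h₁ : ContDiffAt ℝ 2 κ₁ t) (h₂ : ContDiffAt ℝ 2 κ₂ t) :
    HasDerivAt (Wfun κ₁ κ₂) (κ₁ t * deriv (deriv κ₂) t - deriv (deriv κ₁) t * κ₂ t) t := by
  have h₁' := (h₁.differentiableAt two_ne_zero).hasDerivAt
  have h₂' := (h₂.differentiableAt two_ne_zero).hasDerivAt
  have hsub := (h₁'.mul (hasDerivAt_deriv_of_contDiffAt_two h₂)).sub
    ((hasDerivAt_deriv_of_contDiffAt_two h₁).mul h₂')
  exact hsub.congr_deriv (by ring)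

lemma hasDerivAt_div_eq_Wfun (h₁ : DifferentiableAt ℝ κ₁ t) (h₂ : DifferentiableAt ℝ κ₂ t)
    (hne : κ₁ t ≠ 0) :
    HasDerivAt (fun s => κ₂ s / κ₁ s) (Wfun κ₁ κ₂ t / κ₁ t ^ 2) t :=
  (h₂.hasDerivAt.fun_div h₁.hasDerivAt hne).congr_deriv (by rw [Wfun]; ring)

lemma IsErmakovSolutionAt.hasDerivAt_Wfun_div (had : DifferentiableAt ℝ a t) (ha : a t ≠ 0)
    (h₁ : IsErmakovSolutionAt a Q C₁ κ₁ t) (h₂ : IsErmakovSolutionAt a Q C₂ κ₂ t) :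
    HasDerivAt (fun s => Wfun κ₁ κ₂ s / (2 * a s))
      (2 * a t * (C₂ * κ₁ t / κ₂ t ^ 3 - C₁ * κ₂ t / κ₁ t ^ 3)) t := by
  have hκ₁'' : deriv (deriv κ₁) t = C₁ * (2 * a t) ^ 2 / κ₁ t ^ 3
      + deriv a t / a t * deriv κ₁ t - Q t * κ₁ t := by
    rw [← h₁.ermakovOp_eq, ermakovOp]
    ring
  have hκ₂'' : deriv (deriv κ₂) t = C₂ * (2 * a t) ^ 2 / κ₂ t ^ 3
      + deriv a t / a t * deriv κ₂ t - Q t * κ₂ t := by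
    rw [← h₂.ermakovOp_eq, ermakovOp]
    ring
  have hdiv := (hasDerivAt_Wfun h₁.contDiffAt h₂.contDiffAt).fun_div
    (had.hasDerivAt.const_mul 2) (mul_ne_zero two_ne_zero ha)
  refine hdiv.congr_deriv ?_
  have hne₁ := h₁.ne_zero
  have hne₂ := h₂.ne_zero
  rw [hκ₁'', hκ₂'', Wfun]
  field_simp
  ring

lemma Wfun_swap (κ₁ κ₂ : ℝ → ℝ) (t : ℝ) : Wfun κ₂ κ₁ t = -Wfun κ₁ κ₂ t := by
  simp only [Wfun]
  ring

lemma IsErmakovSolutionAt.hasDerivAt_Jfun (had : DifferentiableAt ℝ a t) (ha : a t ≠ 0)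
    (h₁ : IsErmakovSolutionAt a Q C₁ κ₁ t) (h₂ : IsErmakovSolutionAt a Q C₂ κ₂ t) :
    HasDerivAt (Jfun a κ₁ κ₂ C₁ C₂) 0 t := by
  have hd₁ := h₁.contDiffAt.differentiableAt two_ne_zero
  have hd₂ := h₂.contDiffAt.differentiableAt two_ne_zero
  have hW := (h₁.hasDerivAt_Wfun_div had ha h₂).fun_pow 2
  have hquot₂₁ := ((hasDerivAt_div_eq_Wfun hd₁ hd₂ h₁.ne_zero).fun_pow 2).const_mul C₁
  have hquot₁₂ := ((hasDerivAt_div_eq_Wfun hd₂ hd₁ h₂.ne_zero).fun_pow 2).const_mul C₂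
  refine ((hW.add hquot₂₁).add hquot₁₂).congr_deriv ?_
  rw [Wfun_swap κ₁ κ₂]
  push_cast
  field_simp
  ring

end Invariant

theorem statement_12_general {a Q κ₁ κ₂ : ℝ → ℝ} {s : Set ℝ} {C₁ C₂ D₁ D₂ : ℝ}
    (hs : IsOpen s) (hconn : IsPreconnected s)
    (had : ∀ t ∈ s, DifferentiableAt ℝ a t) (hane : ∀ t ∈ s, a t ≠ 0)
    (h₁ : ∀ t ∈ s, IsErmakovSolutionAt a Q C₁ κ₁ t)
    (h₂ : ∀ t ∈ s, IsErmakovSolutionAt a Q C₂ κ₂ t)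
    (hpos : ∀ t ∈ s, 0 < D₁ * κ₁ t ^ 2 + D₂ * κ₂ t ^ 2) :
    (∀ t₀ ∈ s, ∀ t ∈ s, Jfun a κ₁ κ₂ C₁ C₂ t₀ = Jfun a κ₁ κ₂ C₁ C₂ t) ∧
    ∀ t₀ ∈ s, ∀ t ∈ s,
      IsErmakovSolutionAt a Q (C₁ * D₁ ^ 2 + C₂ * D₂ ^ 2 + D₁ * D₂ * Jfun a κ₁ κ₂ C₁ C₂ t₀)
        (fun r => √(D₁ * κ₁ r ^ 2 + D₂ * κ₂ r ^ 2)) t := by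
  have hJ' : ∀ t ∈ s, HasDerivAt (Jfun a κ₁ κ₂ C₁ C₂) 0 t := fun t ht =>
    (h₁ t ht).hasDerivAt_Jfun (had t ht) (hane t ht) (h₂ t ht)
  have hJ : ∀ t₀ ∈ s, ∀ t ∈ s, Jfun a κ₁ κ₂ C₁ C₂ t₀ = Jfun a κ₁ κ₂ C₁ C₂ t :=
    fun t₀ ht₀ t ht => hs.is_const_of_deriv_eq_zero hconn
      (fun r hr => (hJ' r hr).differentiableAt.differentiableWithinAt)
      (fun r hr => (hJ' r hr).deriv) ht₀ ht
  refine ⟨hJ, fun t₀ ht₀ t ht => ?_⟩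
  rw [hJ t₀ ht₀ t ht]
  exact (h₁ t ht).sqrt_superposition (hane t ht) (h₂ t ht) (hpos t ht)

/-- General nonlinear superposition principle for Ermakov's equations:
if κ₁, κ₂ solve κᵢ′′ − (a′/a)κᵢ′ + Qκᵢ = C₀⁽ⁱ⁾(2a)²/κᵢ³ on an open interval (t₁,t₂),
then J is constant, and κ = √(D₁κ₁² + D₂κ₂²) solves the Ermakov equation with
constant C₀ = C₀⁽¹⁾D₁² + C₀⁽²⁾D₂² + D₁D₂J. -/
theorem statement_12
    (a b c d κ₁ κ₂ : ℝ → ℝ) (t₁ t₂ : ℝ) (C₀₁ C₀₂ D₁ D₂ : ℝ)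
    (ha : ContDiff ℝ 1 a) (hc : ContDiff ℝ 1 c) (hd : ContDiff ℝ 1 d)
    (hb : Continuous b)
    (hane : ∀ t ∈ Set.Ioo t₁ t₂, a t ≠ 0)
    (hκ₁ : ContDiffOn ℝ 2 κ₁ (Set.Ioo t₁ t₂)) (hκ₂ : ContDiffOn ℝ 2 κ₂ (Set.Ioo t₁ t₂))
    (hκ₁ne : ∀ t ∈ Set.Ioo t₁ t₂, κ₁ t ≠ 0) (hκ₂ne : ∀ t ∈ Set.Ioo t₁ t₂, κ₂ t ≠ 0)
    (hEq1 : ∀ t ∈ Set.Ioo t₁ t₂, deriv (deriv κ₁) t - (deriv a t / a t) * deriv κ₁ t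
        + Qfun a b c d t * κ₁ t = C₀₁ * (2 * a t) ^ 2 / κ₁ t ^ 3)
    (hEq2 : ∀ t ∈ Set.Ioo t₁ t₂, deriv (deriv κ₂) t - (deriv a t / a t) * deriv κ₂ t
        + Qfun a b c d t * κ₂ t = C₀₂ * (2 * a t) ^ 2 / κ₂ t ^ 3)
    (hpos : ∀ t ∈ Set.Ioo t₁ t₂, 0 < D₁ * κ₁ t ^ 2 + D₂ * κ₂ t ^ 2) :
    -- J is constant on the interval
    (∀ s ∈ Set.Ioo t₁ t₂, ∀ t ∈ Set.Ioo t₁ t₂,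
        Jfun a κ₁ κ₂ C₀₁ C₀₂ s = Jfun a κ₁ κ₂ C₀₁ C₀₂ t) ∧
    -- κ = √(D₁κ₁² + D₂κ₂²) solves the Ermakov equation with the stated constant
    (∀ t ∈ Set.Ioo t₁ t₂,
        deriv (deriv fun s => Real.sqrt (D₁ * κ₁ s ^ 2 + D₂ * κ₂ s ^ 2)) t
          - (deriv a t / a t) *
              deriv (fun s => Real.sqrt (D₁ * κ₁ s ^ 2 + D₂ * κ₂ s ^ 2)) t
          + Qfun a b c d t * Real.sqrt (D₁ * κ₁ t ^ 2 + D₂ * κ₂ t ^ 2)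
        = (C₀₁ * D₁ ^ 2 + C₀₂ * D₂ ^ 2 + D₁ * D₂ * Jfun a κ₁ κ₂ C₀₁ C₀₂ t)
            * (2 * a t) ^ 2 / Real.sqrt (D₁ * κ₁ t ^ 2 + D₂ * κ₂ t ^ 2) ^ 3) := by
  obtain ⟨hJ, hsol⟩ := statement_12_general (Q := Qfun a b c d) isOpen_Ioo isPreconnected_Ioo
    (fun t _ => ha.differentiable one_ne_zero t) hane
    (fun t ht => ⟨hκ₁.contDiffAt (isOpen_Ioo.mem_nhds ht), hκ₁ne t ht, hEq1 t ht⟩)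
    (fun t ht => ⟨hκ₂.contDiffAt (isOpen_Ioo.mem_nhds ht), hκ₂ne t ht, hEq2 t ht⟩) hpos
  exact ⟨hJ, fun t ht => (hsol t ht t ht).ermakovOp_eq⟩
end

section
/- (Generalized Ermakov invariant.) Let a, b, c, d : ℝ → ℝ with a, c, d continuously differentiable, b continuous, a(t) ≠ 0 on an open interval I, and Q(t) = 4ab + (a′/a − c − d)(c+d) − c′ − d′. Let κ₁, κ₂ : I → ℝ be twice continuously differentiable nonvanishing solutions of κᵢ′′ − (a′/a)κᵢ′ + Qκᵢ = C₀⁽ⁱ⁾(2a)²/κᵢ³ (i = 1, 2) with real constants C₀⁽¹⁾, C₀⁽²⁾, and set W = κ₁κ₂′ − κ₁′κ₂. Then the function t ↦ (W(t)/(2a(t)))² + C₀⁽¹⁾(κ₂(t)/κ₁(t))² + C₀⁽²⁾(κ₁(t)/κ₂(t))² has derivative identically zero on I (it is a constant of the motion). -/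
/-!
With `p = 2a`, write `L κ = κ'' - (p'/p) κ' + q κ`. Lagrange's identity
`(W/p)' = (κ₁ L κ₂ - κ₂ L κ₁) / p` eliminates both the damping and `q`. Inserting
`L κᵢ = Cᵢ p² / κᵢ³` and multiplying by `2 W / p` gives
`((W/p)²)' = 2 W (C₂ κ₁ / κ₂³ - C₁ κ₂ / κ₁³)`, and since `(κ₂/κ₁)' = W / κ₁²` and
`(κ₁/κ₂)' = -W / κ₂²`, the right-hand side is `-(C₁ (κ₂/κ₁)² + C₂ (κ₁/κ₂)²)'`.
-/

section Ermakov

variable {𝕜 : Type*} [NontriviallyNormedField 𝕜]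

/-- The Wronskian `u v' - u' v` over an arbitrary nontrivially normed field; on real functions it
is definitionally equal to `Wfun`. -/
noncomputable def wronskian (u v : 𝕜 → 𝕜) (t : 𝕜) : 𝕜 :=
  u t * deriv v t - deriv u t * v t

/-- The linear part `κ'' - (p'/p) κ' + q κ` of the generalized Ermakov equation. The paper's
coefficient `a'/a` is `p'/p` for `p = 2a`. -/
noncomputable def ermakovOperator (p q κ : 𝕜 → 𝕜) (t : 𝕜) : 𝕜 :=
  deriv (deriv κ) t - deriv p t / p t * deriv κ t + q t * κ t

/-- `κ` is a nonvanishing, twice differentiable solution on `S` of the generalized Ermakov equation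
`κ'' - (p'/p) κ' + q κ = C p² / κ³`. Derivatives are those of functions on all of `𝕜`, so the notion
is meant for open `S`. -/
structure IsErmakovSolutionOn (p q : 𝕜 → 𝕜) (C : 𝕜) (κ : 𝕜 → 𝕜) (S : Set 𝕜) : Prop where
  differentiableOn : DifferentiableOn 𝕜 κ S
  differentiableOn_deriv : DifferentiableOn 𝕜 (deriv κ) S
  ne_zero : ∀ t ∈ S, κ t ≠ 0
  ermakovOperator_eq : ∀ t ∈ S, ermakovOperator p q κ t = C * p t ^ 2 / κ t ^ 3

theorem wronskian_swap (u v : 𝕜 → 𝕜) (t : 𝕜) : wronskian v u t = -wronskian u v t := by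
  simp only [wronskian]
  ring

section Derivatives

variable {p u v : 𝕜 → 𝕜} {t : 𝕜}

theorem hasDerivAt_wronskian (hu : DifferentiableAt 𝕜 u t) (hv : DifferentiableAt 𝕜 v t)
    (hu' : DifferentiableAt 𝕜 (deriv u) t) (hv' : DifferentiableAt 𝕜 (deriv v) t) :
    HasDerivAt (wronskian u v) (u t * deriv (deriv v) t - deriv (deriv u) t * v t) t := by
  refine ((hu.hasDerivAt.mul hv'.hasDerivAt).sub
    (hu'.hasDerivAt.mul hv.hasDerivAt)).congr_deriv ?_
  ring

theorem hasDerivAt_div_eq_wronskian (hu : DifferentiableAt 𝕜 u t) (hv : DifferentiableAt 𝕜 v t)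
    (hu0 : u t ≠ 0) :
    HasDerivAt (fun s => v s / u s) (wronskian u v t / u t ^ 2) t := by
  refine (hv.hasDerivAt.fun_div hu.hasDerivAt hu0).congr_deriv ?_
  simp only [wronskian]
  ring

theorem hasDerivAt_wronskian_div (q : 𝕜 → 𝕜) (hp : DifferentiableAt 𝕜 p t) (hp0 : p t ≠ 0)
    (hu : DifferentiableAt 𝕜 u t) (hv : DifferentiableAt 𝕜 v t)
    (hu' : DifferentiableAt 𝕜 (deriv u) t) (hv' : DifferentiableAt 𝕜 (deriv v) t) :
    HasDerivAt (fun s => wronskian u v s / p s)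
      ((u t * ermakovOperator p q v t - ermakovOperator p q u t * v t) / p t) t := by
  refine ((hasDerivAt_wronskian hu hv hu' hv').fun_div hp.hasDerivAt hp0).congr_deriv ?_
  simp only [wronskian, ermakovOperator]
  field_simp
  ring

end Derivatives

namespace IsErmakovSolutionOn

variable {p q κ κ₁ κ₂ : 𝕜 → 𝕜} {C C₁ C₂ : 𝕜} {S : Set 𝕜} {t : 𝕜}

theorem differentiableAt (h : IsErmakovSolutionOn p q C κ S) (hS : IsOpen S) (ht : t ∈ S) :
    DifferentiableAt 𝕜 κ t :=
  h.differentiableOn.differentiableAt (hS.mem_nhds ht)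

theorem differentiableAt_deriv (h : IsErmakovSolutionOn p q C κ S) (hS : IsOpen S) (ht : t ∈ S) :
    DifferentiableAt 𝕜 (deriv κ) t :=
  h.differentiableOn_deriv.differentiableAt (hS.mem_nhds ht)

theorem of_contDiffOn {a : 𝕜 → 𝕜} {r : 𝕜} (hr : r ≠ 0) (hS : IsOpen S)
    (hκ : ContDiffOn 𝕜 2 κ S) (hκ0 : ∀ t ∈ S, κ t ≠ 0)
    (heq : ∀ t ∈ S, deriv (deriv κ) t - deriv a t / a t * deriv κ t + q t * κ t
      = C * (r * a t) ^ 2 / κ t ^ 3) :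
    IsErmakovSolutionOn (fun s => r * a s) q C κ S where
  differentiableOn := hκ.differentiableOn two_ne_zero
  differentiableOn_deriv :=
    (hκ.deriv_of_isOpen hS one_add_one_eq_two.le).differentiableOn one_ne_zero
  ne_zero := hκ0
  ermakovOperator_eq t ht := by
    rw [ermakovOperator, deriv_const_mul_field, mul_div_mul_left _ _ hr]
    exact heq t ht

theorem hasDerivAt_wronskian_div (h₁ : IsErmakovSolutionOn p q C₁ κ₁ S)
    (h₂ : IsErmakovSolutionOn p q C₂ κ₂ S) (hS : IsOpen S) (ht : t ∈ S)
    (hp : DifferentiableAt 𝕜 p t) (hp0 : p t ≠ 0) :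
    HasDerivAt (fun s => wronskian κ₁ κ₂ s / p s)
      (p t * (C₂ * κ₁ t / κ₂ t ^ 3 - C₁ * κ₂ t / κ₁ t ^ 3)) t := by
  refine (_root_.hasDerivAt_wronskian_div q hp hp0
    (h₁.differentiableAt hS ht) (h₂.differentiableAt hS ht)
    (h₁.differentiableAt_deriv hS ht) (h₂.differentiableAt_deriv hS ht)).congr_deriv ?_
  rw [h₁.ermakovOperator_eq t ht, h₂.ermakovOperator_eq t ht]
  field_simp

end IsErmakovSolutionOn

theorem statement_13_general {p q κ₁ κ₂ : 𝕜 → 𝕜} {C₁ C₂ : 𝕜} {S : Set 𝕜} (hS : IsOpen S)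
    (hp : DifferentiableOn 𝕜 p S) (hp0 : ∀ t ∈ S, p t ≠ 0)
    (h₁ : IsErmakovSolutionOn p q C₁ κ₁ S) (h₂ : IsErmakovSolutionOn p q C₂ κ₂ S) :
    ∀ t ∈ S, HasDerivAt (fun s => (wronskian κ₁ κ₂ s / p s) ^ 2
      + C₁ * (κ₂ s / κ₁ s) ^ 2 + C₂ * (κ₁ s / κ₂ s) ^ 2) 0 t := by
  intro t ht
  have hpt : p t ≠ 0 := hp0 t ht
  have hκ₁t : κ₁ t ≠ 0 := h₁.ne_zero t ht
  have hκ₂t : κ₂ t ≠ 0 := h₂.ne_zero t ht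
  have hκ₁ : DifferentiableAt 𝕜 κ₁ t := h₁.differentiableAt hS ht
  have hκ₂ : DifferentiableAt 𝕜 κ₂ t := h₂.differentiableAt hS ht
  have hW : HasDerivAt (fun s => wronskian κ₁ κ₂ s / p s)
      (p t * (C₂ * κ₁ t / κ₂ t ^ 3 - C₁ * κ₂ t / κ₁ t ^ 3)) t :=
    h₁.hasDerivAt_wronskian_div h₂ hS ht (hp.differentiableAt (hS.mem_nhds ht)) hpt
  have hκ₂₁ : HasDerivAt (fun s => κ₂ s / κ₁ s) (wronskian κ₁ κ₂ t / κ₁ t ^ 2) t :=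
    hasDerivAt_div_eq_wronskian hκ₁ hκ₂ hκ₁t
  have hκ₁₂ : HasDerivAt (fun s => κ₁ s / κ₂ s) (-wronskian κ₁ κ₂ t / κ₂ t ^ 2) t :=
    wronskian_swap κ₁ κ₂ t ▸ hasDerivAt_div_eq_wronskian hκ₂ hκ₁ hκ₂t
  refine (((hW.fun_pow 2).fun_add ((hκ₂₁.fun_pow 2).const_mul C₁)).fun_add
    ((hκ₁₂.fun_pow 2).const_mul C₂)).congr_deriv ?_
  simp only [Nat.add_one_sub_one, pow_one, Nat.cast_ofNat]
  field_simp
  ring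

end Ermakov

/-- Generalized Ermakov invariant: for two nonvanishing solutions
κ₁, κ₂ of κᵢ′′ − (a′/a)κᵢ′ + Qκᵢ = C₀⁽ⁱ⁾(2a)²/κᵢ³ on an open interval (t₁,t₂), the
function (W/(2a))² + C₀⁽¹⁾(κ₂/κ₁)² + C₀⁽²⁾(κ₁/κ₂)² has identically zero derivative. -/
theorem statement_13
    (a b c d κ₁ κ₂ : ℝ → ℝ) (t₁ t₂ : ℝ) (C₀₁ C₀₂ : ℝ)
    (ha : ContDiff ℝ 1 a) (hc : ContDiff ℝ 1 c) (hd : ContDiff ℝ 1 d)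
    (hb : Continuous b)
    (hane : ∀ t ∈ Set.Ioo t₁ t₂, a t ≠ 0)
    (hκ₁ : ContDiffOn ℝ 2 κ₁ (Set.Ioo t₁ t₂)) (hκ₂ : ContDiffOn ℝ 2 κ₂ (Set.Ioo t₁ t₂))
    (hκ₁ne : ∀ t ∈ Set.Ioo t₁ t₂, κ₁ t ≠ 0) (hκ₂ne : ∀ t ∈ Set.Ioo t₁ t₂, κ₂ t ≠ 0)
    (hEq1 : ∀ t ∈ Set.Ioo t₁ t₂, deriv (deriv κ₁) t - (deriv a t / a t) * deriv κ₁ t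
        + Qfun a b c d t * κ₁ t = C₀₁ * (2 * a t) ^ 2 / κ₁ t ^ 3)
    (hEq2 : ∀ t ∈ Set.Ioo t₁ t₂, deriv (deriv κ₂) t - (deriv a t / a t) * deriv κ₂ t
        + Qfun a b c d t * κ₂ t = C₀₂ * (2 * a t) ^ 2 / κ₂ t ^ 3) :
    ∀ t ∈ Set.Ioo t₁ t₂,
      deriv (fun s => (Wfun κ₁ κ₂ s / (2 * a s)) ^ 2
          + C₀₁ * (κ₂ s / κ₁ s) ^ 2 + C₀₂ * (κ₁ s / κ₂ s) ^ 2) t = 0 := by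
  intro t ht
  exact (statement_13_general isOpen_Ioo
    ((ha.differentiable one_ne_zero).const_mul 2).differentiableOn
    (fun s hs => mul_ne_zero two_ne_zero (hane s hs))
    (.of_contDiffOn two_ne_zero isOpen_Ioo hκ₁ hκ₁ne hEq1)
    (.of_contDiffOn two_ne_zero isOpen_Ioo hκ₂ hκ₂ne hEq2) t ht).deriv
end
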